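/- arXiv:1903.02896 — 3 statements merged into one kernel-verified Lean document; each statement's English description precedes it below -/
import Mathlib

section
/- For the full shift T on X = ∏_{n∈ℤ} M over a perfect Polish metric space M, the set {μ ∈ M(T) : R̲(x,y) = 0 for (μ×μ)-a.e. (x,y) ∈ X×X} of invariant measures whose lower quantitative waiting time indicator vanishes (μ×μ)-almost everywhere is a dense Gδ subset of M(T). -/
open Filter MeasureTheory Topology Metric Set
open scoped ENNReal NNReal

noncomputable section
attribute [local instance] Classical.propDecidable

/-- The full (bilateral) shift on the product space `ℤ → M`: `(T x) i = x (i - 1)`. -/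
def fullShift {M : Type*} (x : ℤ → M) : ℤ → M := fun i => x (i - 1)

/-- The metric `d(x,y) = ∑_{n ∈ ℤ} 2^{-|n|} ρ(xₙ,yₙ)/(1 + ρ(xₙ,yₙ))` on `ℤ → M`,
compatible with the product topology. -/
def shiftDist {M : Type*} [MetricSpace M] (x y : ℤ → M) : ℝ :=
  ∑' n : ℤ, (1 / 2 : ℝ) ^ n.natAbs * (dist (x n) (y n) / (1 + dist (x n) (y n)))

/-- Lower local dimension `d̲_μ(x) = liminf_{ε → 0⁺} log μ(B(x,ε)) / log ε` of `μ` at `x`,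
with respect to the distance function `d`; by convention it is `∞` if some ball
centered at `x` has measure zero. -/
def lowerLocalDim {X : Type*} [MeasurableSpace X] (d : X → X → ℝ)
    (μ : Measure X) (x : X) : ℝ≥0∞ :=
  if ∃ ε > 0, μ {y | d x y < ε} = 0 then ⊤
  else liminf (fun ε : ℝ =>
    ENNReal.ofReal (Real.log (μ {y | d x y < ε}).toReal / Real.log ε)) (𝓝[>] (0 : ℝ))

/-- Upper local dimension `d̄_μ(x) = limsup_{ε → 0⁺} log μ(B(x,ε)) / log ε`. -/
def upperLocalDim {X : Type*} [MeasurableSpace X] (d : X → X → ℝ)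
    (μ : Measure X) (x : X) : ℝ≥0∞ :=
  if ∃ ε > 0, μ {y | d x y < ε} = 0 then ⊤
  else limsup (fun ε : ℝ =>
    ENNReal.ofReal (Real.log (μ {y | d x y < ε}).toReal / Real.log ε)) (𝓝[>] (0 : ℝ))

/-- The ratio `log τ_r(x) / (- log r)`, where `τ_r(x) = inf {n ≥ 1 | Tⁿ x ∈ B̄(x,r)}` is the
first return time of `x` to the closed ball `B̄(x,r)`; by convention it is `∞` when the
return time is infinite. -/
def recRatio {X : Type*} (d : X → X → ℝ) (T : X → X) (x : X) (r : ℝ) : ℝ≥0∞ :=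
  if ∃ n : ℕ, 1 ≤ n ∧ d (T^[n] x) x ≤ r then
    ENNReal.ofReal
      (Real.log ((sInf {n : ℕ | 1 ≤ n ∧ d (T^[n] x) x ≤ r} : ℕ) : ℝ) / (- Real.log r))
  else ⊤

/-- Lower recurrence rate `R̲(x) = liminf_{r → 0⁺} log τ_r(x) / (- log r)`. -/
def lowerRecRate {X : Type*} (d : X → X → ℝ) (T : X → X) (x : X) : ℝ≥0∞ :=
  liminf (recRatio d T x) (𝓝[>] (0 : ℝ))

/-- Upper recurrence rate `R̄(x) = limsup_{r → 0⁺} log τ_r(x) / (- log r)`. -/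
def upperRecRate {X : Type*} (d : X → X → ℝ) (T : X → X) (x : X) : ℝ≥0∞ :=
  limsup (recRatio d T x) (𝓝[>] (0 : ℝ))

/-- The ratio `log τ_r(x,y) / (- log r)`, where `τ_r(x,y) = inf {n ≥ 1 | Tⁿ x ∈ B̄(y,r)}` is the
first entrance time of the orbit of `x` into the closed ball `B̄(y,r)`; by convention `∞`
when the entrance time is infinite. -/
def waitRatio {X : Type*} (d : X → X → ℝ) (T : X → X) (x y : X) (r : ℝ) : ℝ≥0∞ :=
  if ∃ n : ℕ, 1 ≤ n ∧ d (T^[n] x) y ≤ r then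
    ENNReal.ofReal
      (Real.log ((sInf {n : ℕ | 1 ≤ n ∧ d (T^[n] x) y ≤ r} : ℕ) : ℝ) / (- Real.log r))
  else ⊤

/-- Lower quantitative waiting time indicator `R̲(x,y)`. -/
def lowerWaitRate {X : Type*} (d : X → X → ℝ) (T : X → X) (x y : X) : ℝ≥0∞ :=
  liminf (waitRatio d T x y) (𝓝[>] (0 : ℝ))

/-- Upper quantitative waiting time indicator `R̄(x,y)`. -/
def upperWaitRate {X : Type*} (d : X → X → ℝ) (T : X → X) (x y : X) : ℝ≥0∞ :=
  limsup (waitRatio d T x y) (𝓝[>] (0 : ℝ))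

/-- The entropy `H(P) = ∑_c -μ(P_c) log μ(P_c)` of the finite measurable partition
`P_c = f ⁻¹ {c}` of `X` induced by a map `f` into a finite set. -/
def partitionEntropy {X F : Type*} [MeasurableSpace X] [Fintype F]
    (μ : Measure X) (f : X → F) : ℝ :=
  ∑ c : F, Real.negMulLog ((μ (f ⁻¹' {c})).toReal)

/-- The Kolmogorov–Sinai (measure-theoretic) entropy `h_μ(T)`: the supremum, over all finite
measurable partitions (coded by measurable maps `f : X → Fin k`), of the limit of
`H(⋁_{i<n} T⁻ⁱ P) / n`. -/
def kolmogorovSinaiEntropy {X : Type*} [MeasurableSpace X] (T : X → X) (μ : Measure X) :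
    ℝ≥0∞ :=
  ⨆ (k : ℕ) (f : X → Fin k) (_ : Measurable f),
    ENNReal.ofReal
      (liminf (fun n : ℕ =>
        partitionEntropy μ (fun x (i : Fin n) => f (T^[(i : ℕ)] x)) / n) atTop)

end

namespace FullShiftWait

lemma rate_zero_iff {X : Type*} (d : X → X → ℝ) (T : X → X) (x y : X) :
    lowerWaitRate d T x y = 0 ↔ ∀ k : ℕ, ∃ n : ℕ, 1 ≤ n ∧ ∃ r : ℝ, 0 < r ∧ r < 1 / ((k : ℝ) + 1) ∧
      Real.log n < (1 / ((k : ℝ) + 1)) * (- Real.log r) ∧ d (T^[n] x) y < r := by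
  constructor
  · intro h k
    have hk : (0 : ℝ) < 1 / ((k : ℝ) + 1) := by positivity
    have hk1 : 1 / ((k : ℝ) + 1) ≤ 1 := by
      rw [div_le_one (by positivity)]; linarith [(Nat.cast_nonneg k : (0 : ℝ) ≤ k)]
    have h1 : liminf (waitRatio d T x y) (𝓝[>] (0 : ℝ)) < ENNReal.ofReal (1 / ((k : ℝ) + 1)) := by
      have : liminf (waitRatio d T x y) (𝓝[>] (0 : ℝ)) = 0 := h
      rw [this]; exact ENNReal.ofReal_pos.2 hk
    have h2 := frequently_lt_of_liminf_lt (by isBoundedDefault) h1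
    have h3 : ∀ᶠ r in 𝓝[>] (0 : ℝ), r ∈ Ioo 0 (1 / ((k : ℝ) + 1)) := Ioo_mem_nhdsGT hk
    obtain ⟨r, hr, hr0, hr1⟩ := (h2.and_eventually h3).exists
    unfold waitRatio at hr
    split_ifs at hr with hex
    · have hmem := Nat.sInf_mem (s := {n : ℕ | 1 ≤ n ∧ d (T^[n] x) y ≤ r}) hex
      set n := sInf {n : ℕ | 1 ≤ n ∧ d (T^[n] x) y ≤ r} with hn
      refine ⟨n, hmem.1, ?_⟩
      rw [ENNReal.ofReal_lt_ofReal_iff hk] at hr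
      have hlog : 0 < - Real.log r := by
        have := Real.log_neg hr0 (hr1.trans_le hk1); linarith
      rw [div_lt_iff₀ hlog] at hr
      have hc : ContinuousAt (fun r : ℝ => (1 / ((k : ℝ) + 1)) * (- Real.log r)) r :=
        continuousAt_const.mul (Real.continuousAt_log hr0.ne').neg
      have e1 : ∀ᶠ s in 𝓝[>] r, Real.log n < (1 / ((k : ℝ) + 1)) * (- Real.log s) :=
        (hc.eventually (lt_mem_nhds hr)).filter_mono nhdsWithin_le_nhds
      have e2 : ∀ᶠ s in 𝓝[>] r, s ∈ Ioo r (1 / ((k : ℝ) + 1)) := Ioo_mem_nhdsGT hr1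
      obtain ⟨s, hs1, hs2, hs3⟩ := (e1.and e2).exists
      exact ⟨s, hr0.trans hs2, hs3, hs1, hmem.2.trans_lt hs2⟩
    · exact absurd hr (by simp)
  · intro h
    unfold lowerWaitRate
    refine le_antisymm (le_of_forall_gt fun ε hε => ?_) bot_le
    obtain ⟨ε', hε'0, hε'⟩ := ENNReal.lt_iff_exists_real_btwn.1 hε
    have hε'pos : 0 < ε' := ENNReal.ofReal_pos.1 hε'.1
    refine lt_of_le_of_lt (liminf_le_of_frequently_le ?_ (by isBoundedDefault)) hε'.2
    rw [Filter.Frequently, eventually_nhdsWithin_iff, Metric.eventually_nhds_iff]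
    rintro ⟨δ, hδ, hh⟩
    obtain ⟨k, hk⟩ := exists_nat_one_div_lt (lt_min hδ (lt_min hε'pos one_pos))
    obtain ⟨n, hn, r, hr0, hr1, hlog, hd⟩ := h k
    have hrδ : r < δ := hr1.trans (hk.trans_le (min_le_left _ _))
    have hkε : 1 / ((k : ℝ) + 1) < ε' := hk.trans_le ((min_le_right _ _).trans (min_le_left _ _))
    have hr1' : r < 1 := hr1.trans (hk.trans_le ((min_le_right _ _).trans (min_le_right _ _)))
    refine hh (y := r) (by rw [Real.dist_eq, sub_zero, abs_of_pos hr0]; exact hrδ) hr0 ?_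
    have hlr : 0 < - Real.log r := by
      have := Real.log_neg hr0 hr1'; linarith
    have hex : ∃ n : ℕ, 1 ≤ n ∧ d (T^[n] x) y ≤ r := ⟨n, hn, hd.le⟩
    unfold waitRatio
    rw [if_pos hex]
    have hmem := Nat.sInf_mem (s := {n : ℕ | 1 ≤ n ∧ d (T^[n] x) y ≤ r}) hex
    have hle : sInf {n : ℕ | 1 ≤ n ∧ d (T^[n] x) y ≤ r} ≤ n := Nat.sInf_le ⟨hn, hd.le⟩
    apply ENNReal.ofReal_le_ofReal
    rw [div_le_iff₀ hlr]
    calc Real.log (sInf {n : ℕ | 1 ≤ n ∧ d (T^[n] x) y ≤ r} : ℕ) ≤ Real.log n := by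
          apply Real.log_le_log
          · exact_mod_cast hmem.1
          · exact_mod_cast hle
      _ ≤ _ := hlog.le
      _ ≤ _ := by gcongr

lemma rate_zero_of_hit {X : Type*} (d : X → X → ℝ) (T : X → X) (x y : X) (hd : d y y = 0)
    {n : ℕ} (hn : 1 ≤ n) (h : T^[n] x = y) : lowerWaitRate d T x y = 0 := by
  rw [rate_zero_iff]
  intro k
  refine ⟨n, hn, ?_⟩
  have hk : (0 : ℝ) < 1 / ((k : ℝ) + 1) := by positivity
  have t : Tendsto (fun r : ℝ => (1 / ((k : ℝ) + 1)) * (- Real.log r)) (𝓝[>] 0) atTop :=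
    Tendsto.const_mul_atTop hk (tendsto_neg_atBot_atTop.comp Real.tendsto_log_nhdsGT_zero)
  have h3 : ∀ᶠ r in 𝓝[>] (0 : ℝ), r ∈ Ioo 0 (1 / ((k : ℝ) + 1)) := Ioo_mem_nhdsGT hk
  obtain ⟨r, h1, h2, h3⟩ := ((t.eventually_gt_atTop (Real.log n)).and h3).exists
  exact ⟨r, h2, h3, h1, by rw [h, hd]; exact h2⟩

lemma summable_half_natAbs : Summable (fun n : ℤ => (1 / 2 : ℝ) ^ n.natAbs) := by
  apply Summable.of_nat_of_neg
  · simpa using summable_geometric_two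
  · simpa using summable_geometric_two

lemma continuous_shiftDist {M : Type*} [MetricSpace M] :
    Continuous (fun p : (ℤ → M) × (ℤ → M) => shiftDist p.1 p.2) := by
  unfold shiftDist
  refine continuous_tsum (u := fun n : ℤ => (1 / 2 : ℝ) ^ n.natAbs) (fun n => ?_)
    summable_half_natAbs (fun n p => ?_)
  · refine continuous_const.mul (Continuous.div (by fun_prop) (by fun_prop) fun p => ?_)
    have : 0 ≤ dist (p.1 n) (p.2 n) := dist_nonneg
    positivity
  · have h0 : 0 ≤ dist (p.1 n) (p.2 n) := dist_nonneg
    rw [Real.norm_of_nonneg (by positivity)]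
    apply mul_le_of_le_one_right (by positivity)
    rw [div_le_one (by positivity)]
    linarith

lemma shiftDist_self {M : Type*} [MetricSpace M] (x : ℤ → M) : shiftDist x x = 0 := by
  simp [shiftDist]

lemma continuous_fullShift {M : Type*} [TopologicalSpace M] :
    Continuous (fullShift : (ℤ → M) → (ℤ → M)) := by
  unfold fullShift; fun_prop

lemma isOpen_measure_gt {Ω : Type*} [MeasurableSpace Ω] [TopologicalSpace Ω]
    [OpensMeasurableSpace Ω] [HasOuterApproxClosed Ω] {U : Set Ω} (hU : IsOpen U) (c : ℝ≥0∞) :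
    IsOpen {ν : ProbabilityMeasure Ω | c < (ν : Measure Ω) U} := by
  rw [isOpen_iff_mem_nhds]
  intro ν hν
  have h := ProbabilityMeasure.le_liminf_measure_open_of_tendsto (tendsto_id (x := 𝓝 ν)) hU
  exact eventually_lt_of_lt_liminf (lt_of_lt_of_le hν h) (by isBoundedDefault)

lemma isGδ_ae {Ω : Type*} [MeasurableSpace Ω] [TopologicalSpace Ω]
    [OpensMeasurableSpace Ω] [HasOuterApproxClosed Ω] {U : Set Ω} (hU : IsOpen U) :
    IsGδ {ν : ProbabilityMeasure Ω | ∀ᵐ x ∂(ν : Measure Ω), x ∈ U} := by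
  have : {ν : ProbabilityMeasure Ω | ∀ᵐ x ∂(ν : Measure Ω), x ∈ U} =
      ⋂ j : ℕ, {ν : ProbabilityMeasure Ω | 1 - ((j : ℝ≥0∞) + 1)⁻¹ < (ν : Measure Ω) U} := by
    ext ν
    simp only [mem_ofPred_eq, mem_iInter]
    have e : (∀ᵐ x ∂(ν : Measure Ω), x ∈ U) ↔ (ν : Measure Ω) U = 1 :=
      mem_ae_iff_prob_eq_one hU.measurableSet
    rw [e]
    constructor
    · intro h j
      rw [h]
      apply ENNReal.sub_lt_self (by simp) (by simp)
      simp
    · intro h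
      refine le_antisymm prob_le_one ?_
      have t : Tendsto (fun j : ℕ => 1 - ((j : ℝ≥0∞) + 1)⁻¹) atTop (𝓝 (1 - 0)) := by
        apply ENNReal.Tendsto.sub tendsto_const_nhds _ (by simp)
        have := (tendsto_add_atTop_iff_nat 1).2 ENNReal.tendsto_inv_nat_nhds_zero
        simpa using this
      rw [tsub_zero] at t
      exact le_of_tendsto' t fun j => (h j).le
  rw [this]
  exact IsGδ.iInter_of_isOpen fun j => isOpen_measure_gt hU _

lemma gdelta_part {M : Type*} [MetricSpace M]
    [TopologicalSpace.SeparableSpace M] [MeasurableSpace M] [BorelSpace M] :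
    IsGδ {μ : {ν : ProbabilityMeasure (ℤ → M) // ν.toMeasure.map fullShift = ν.toMeasure} |
        ∀ᵐ p ∂(μ.1.toMeasure.prod μ.1.toMeasure),
          lowerWaitRate shiftDist fullShift p.1 p.2 = 0} := by
  have : SecondCountableTopology M := UniformSpace.secondCountable_of_separable M
  let U : ℕ → Set ((ℤ → M) × (ℤ → M)) := fun k => {p | ∃ n : ℕ, 1 ≤ n ∧ ∃ r : ℝ, 0 < r ∧
    r < 1 / ((k : ℝ) + 1) ∧ Real.log n < (1 / ((k : ℝ) + 1)) * (- Real.log r) ∧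
      shiftDist (fullShift^[n] p.1) p.2 < r}
  have hU : ∀ k, IsOpen (U k) := by
    intro k
    have : U k = ⋃ n : ℕ, ⋃ (_ : 1 ≤ n), ⋃ r : ℝ, ⋃ (_ : 0 < r), ⋃ (_ : r < 1 / ((k : ℝ) + 1)),
        ⋃ (_ : Real.log n < (1 / ((k : ℝ) + 1)) * (- Real.log r)),
          {p : (ℤ → M) × (ℤ → M) | shiftDist (fullShift^[n] p.1) p.2 < r} := by
      ext p; simp only [U, mem_iUnion, mem_ofPred_eq, exists_prop]
    rw [this]
    refine isOpen_iUnion fun n => isOpen_iUnion fun _ => isOpen_iUnion fun r => isOpen_iUnion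
      fun _ => isOpen_iUnion fun _ => isOpen_iUnion fun _ => ?_
    refine isOpen_lt ?_ continuous_const
    have hc : Continuous (fun p : (ℤ → M) × (ℤ → M) => (fullShift^[n] p.1, p.2)) :=
      ((continuous_fullShift.iterate n).comp continuous_fst).prodMk continuous_snd
    exact continuous_shiftDist.comp hc
  have hset : {μ : {ν : ProbabilityMeasure (ℤ → M) // ν.toMeasure.map fullShift = ν.toMeasure} |
        ∀ᵐ p ∂(μ.1.toMeasure.prod μ.1.toMeasure),
          lowerWaitRate shiftDist fullShift p.1 p.2 = 0} =
      ⋂ k, (fun μ : {ν : ProbabilityMeasure (ℤ → M) //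
          ν.toMeasure.map fullShift = ν.toMeasure} => μ.1.prod μ.1) ⁻¹'
        {ν | ∀ᵐ p ∂(ν : Measure ((ℤ → M) × (ℤ → M))), p ∈ U k} := by
    ext μ
    simp only [mem_ofPred_eq, mem_iInter, mem_preimage, ProbabilityMeasure.toMeasure_prod]
    rw [← ae_all_iff]
    simp only [rate_zero_iff]
    rfl
  rw [hset]
  refine IsGδ.iInter fun k => (isGδ_ae (hU k)).preimage ?_
  exact ProbabilityMeasure.continuous_prod.comp
    (continuous_subtype_val.prodMk continuous_subtype_val)

/-- The two-sided shift by `t` positions to the left. -/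
def shiftBy {M : Type*} (t : ℤ) (x : ℤ → M) : ℤ → M := fun i => x (i + t)

lemma fullShift_shiftBy {M : Type*} (t : ℤ) (x : ℤ → M) :
    fullShift (shiftBy t x) = shiftBy (t - 1) x := by
  funext i; simp only [fullShift, shiftBy]; congr 1; ring

lemma fullShift_iterate_shiftBy {M : Type*} (n : ℕ) (t : ℤ) (x : ℤ → M) :
    fullShift^[n] (shiftBy t x) = shiftBy (t - n) x := by
  induction n with
  | zero => simp
  | succ n ih =>
    rw [Function.iterate_succ_apply', ih, fullShift_shiftBy]
    congr 1; push_cast; ring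

lemma continuous_shiftBy {M : Type*} [TopologicalSpace M] (t : ℤ) :
    Continuous (shiftBy t : (ℤ → M) → (ℤ → M)) := by
  unfold shiftBy; fun_prop

/-- Empirical measure of the first `n` points of a sequence. -/
noncomputable def emp {X : Type*} [MeasurableSpace X] (n : ℕ) (z : ℕ → X) : Measure X :=
  (n : ℝ≥0∞)⁻¹ • ∑ t ∈ Finset.range n, Measure.dirac (z t)

lemma emp_prob {X : Type*} [MeasurableSpace X] {n : ℕ} (hn : n ≠ 0) (z : ℕ → X) :
    IsProbabilityMeasure (emp n z) := by
  constructor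
  simp [emp]
  exact ENNReal.inv_mul_cancel (by exact_mod_cast hn) (by simp)

lemma integral_emp {X : Type*} [MeasurableSpace X] (n : ℕ) (z : ℕ → X) (f : X → ℝ)
    (hf : StronglyMeasurable f) :
    ∫ x, f x ∂(emp n z) = (n : ℝ)⁻¹ * ∑ t ∈ Finset.range n, f (z t) := by
  unfold emp
  rw [integral_smul_measure, integral_finsetSum_measure]
  · simp [integral_dirac' _ _ hf]
  · intro i _
    exact integrable_dirac' hf (by simp)

lemma ae_emp {X : Type*} [MeasurableSpace X] (n : ℕ) (z : ℕ → X) (s : Set X)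
    (hs : MeasurableSet s) (h : ∀ t < n, z t ∈ s) : ∀ᵐ x ∂(emp n z), x ∈ s := by
  rw [ae_iff]
  change emp n z sᶜ = 0
  simp only [emp, Measure.smul_apply, Measure.finsetSum_apply, smul_eq_mul, mul_eq_zero,
    Finset.sum_eq_zero_iff, Finset.mem_range]
  right
  intro t ht
  rw [Measure.dirac_apply' _ hs.compl]
  simp [h t ht]

lemma sum_range_mul {N : ℕ} (L : ℕ) (φ : ℕ → ℕ → ℝ) (hN : 0 < N) :
    ∑ t ∈ Finset.range (N * L), φ (t / N) (t % N) =
      ∑ i ∈ Finset.range L, ∑ s ∈ Finset.range N, φ i s := by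
  induction L with
  | zero => simp
  | succ L ih =>
    rw [Nat.mul_succ, Finset.sum_range_add, ih, Finset.sum_range_succ]
    congr 1
    refine Finset.sum_congr rfl fun s hs => ?_
    rw [Finset.mem_range] at hs
    rw [Nat.mul_add_div hN, Nat.div_eq_of_lt hs, Nat.mul_add_mod, Nat.mod_eq_of_lt hs, add_zero]

/-- Strong law: simultaneous approximation of finitely many integrals by averages. -/
lemma exists_avg {X : Type*} [MeasurableSpace X] (μ : Measure X) [IsProbabilityMeasure μ]
    {ι : Type*} (F : Finset ι) (g : ι → X → ℝ) (hm : ∀ i, Measurable (g i))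
    (hi : ∀ i, Integrable (g i) μ) {ε : ℝ} (hε : 0 < ε) :
    ∃ (L : ℕ) (x : ℕ → X), L ≠ 0 ∧ ∀ i ∈ F,
      |(L : ℝ)⁻¹ * ∑ t ∈ Finset.range L, g i (x t) - ∫ y, g i y ∂μ| < ε := by
  obtain ⟨Ω, mΩ, P, X', hX, hlaw, hind, hP⟩ := ProbabilityTheory.exists_iid ℕ μ
  have key : ∀ i ∈ F, ∀ᵐ ω ∂P, Tendsto (fun n : ℕ ↦ (n : ℝ)⁻¹ • (∑ t ∈ Finset.range n,
      g i (X' t ω))) atTop (𝓝 (∫ y, g i y ∂μ)) := by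
    intro i _
    have hE : ∫ y, g i y ∂μ = ∫ ω, g i (X' 0 ω) ∂P := by
      rw [← (hlaw 0).map_eq, integral_map (hX 0).aemeasurable (hm i).aestronglyMeasurable]
    rw [hE]
    refine ProbabilityTheory.strong_law_ae (fun t ω => g i (X' t ω)) ?_ ?_ ?_
    · have := hi i
      rw [← (hlaw 0).map_eq] at this
      exact this.comp_measurable (hX 0)
    · intro s t hst
      exact (hind.indepFun hst).comp (hm i) (hm i)
    · intro t
      exact ((hlaw t).identDistrib (hlaw 0)).comp (hm i)
  have key2 := (Filter.eventually_all_finset F).2 key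
  obtain ⟨ω, hω⟩ := key2.exists
  have e : ∀ᶠ n : ℕ in atTop, ∀ i ∈ F,
      |(n : ℝ)⁻¹ * ∑ t ∈ Finset.range n, g i (X' t ω) - ∫ y, g i y ∂μ| < ε := by
    rw [Filter.eventually_all_finset F]
    intro i hiF
    have := Metric.tendsto_nhds.1 (hω i hiF) ε hε
    simpa [Real.dist_eq] using this
  obtain ⟨L, h1, h2⟩ := (e.and (eventually_ne_atTop 0)).exists
  exact ⟨L, fun t => X' t ω, h2, h1⟩

section
set_option linter.unusedSectionVars false
variable {M : Type*} [MetricSpace M] [TopologicalSpace.SeparableSpace M]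
  [MeasurableSpace M] [BorelSpace M]

lemma map_shiftBy (μ : Measure (ℤ → M)) (h : μ.map fullShift = μ) (s : ℕ) :
    μ.map (shiftBy (s : ℤ)) = μ := by
  have : SecondCountableTopology M := UniformSpace.secondCountable_of_separable M
  induction s with
  | zero =>
    have : (shiftBy ((0 : ℕ) : ℤ) : (ℤ → M) → (ℤ → M)) = id := by funext x i; simp [shiftBy]
    rw [this, Measure.map_id]
  | succ s ih =>
    conv_lhs => rw [← h]
    rw [Measure.map_map (continuous_shiftBy _).measurable continuous_fullShift.measurable]
    have : (shiftBy ((s + 1 : ℕ) : ℤ) ∘ fullShift : (ℤ → M) → (ℤ → M)) = shiftBy (s : ℤ) := by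
      funext x i
      simp only [Function.comp, shiftBy, fullShift]
      congr 1; push_cast; ring
    rw [this, ih]

/-- Points of the block-wise approximation: the shifts of the sample points. -/
def blockPts (N : ℕ) (x : ℕ → ℤ → M) (t : ℕ) : ℤ → M := shiftBy ((t % N : ℕ) : ℤ) (x (t / N))

lemma integral_block (μ : ProbabilityMeasure (ℤ → M))
    (h : (μ : Measure (ℤ → M)).map fullShift = μ) {N : ℕ} (hN : 0 < N) :
    μ ∈ closure {ν : ProbabilityMeasure (ℤ → M) | ∃ (L : ℕ) (x : ℕ → ℤ → M), L ≠ 0 ∧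
      (ν : Measure (ℤ → M)) = emp (N * L) (blockPts N x)} := by
  have : SecondCountableTopology M := UniformSpace.secondCountable_of_separable M
  classical
  let g : BoundedContinuousFunction (ℤ → M) ℝ → (ℤ → M) → ℝ := fun f x =>
    (N : ℝ)⁻¹ * ∑ s ∈ Finset.range N, f (shiftBy (s : ℤ) x)
  have hIntg : ∀ (f : BoundedContinuousFunction (ℤ → M) ℝ) (s : ℕ),
      Integrable (fun x => f (shiftBy (s : ℤ) x)) (μ : Measure (ℤ → M)) := fun f s =>
    (f.compContinuous ⟨_, continuous_shiftBy (s : ℤ)⟩).integrable _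
  have hgm : ∀ f, Measurable (g f) := by
    intro f
    have : Continuous (g f) := continuous_const.mul (continuous_finsetSum _ fun s _ =>
      f.continuous.comp (continuous_shiftBy _))
    exact this.measurable
  have hgi : ∀ f, Integrable (g f) (μ : Measure (ℤ → M)) := fun f =>
    (integrable_finsetSum _ fun s _ => hIntg f s).const_mul _
  have hgint : ∀ f, ∫ x, g f x ∂(μ : Measure (ℤ → M)) = ∫ x, f x ∂(μ : Measure (ℤ → M)) := by
    intro f
    have hs : ∀ s : ℕ, ∫ x, f (shiftBy (s : ℤ) x) ∂(μ : Measure (ℤ → M))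
        = ∫ x, f x ∂(μ : Measure (ℤ → M)) := by
      intro s
      conv_rhs => rw [← map_shiftBy _ h s]
      rw [integral_map (continuous_shiftBy _).measurable.aemeasurable
        f.continuous.aestronglyMeasurable]
    simp only [g]
    rw [integral_const_mul, integral_finsetSum _ fun s _ => hIntg f s]
    simp only [hs, Finset.sum_const, Finset.card_range, nsmul_eq_mul]
    field_simp
  have hex : ∀ q : Finset (BoundedContinuousFunction (ℤ → M) ℝ) × ℕ, ∃ (L : ℕ) (x : ℕ → ℤ → M),
      L ≠ 0 ∧ ∀ f ∈ q.1, |(L : ℝ)⁻¹ * ∑ t ∈ Finset.range L, g f (x t)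
        - ∫ y, f y ∂(μ : Measure (ℤ → M))| < 1 / ((q.2 : ℝ) + 1) := by
    intro q
    obtain ⟨L, x, hL, hh⟩ := exists_avg (μ : Measure (ℤ → M)) q.1 g hgm hgi
      (ε := 1 / ((q.2 : ℝ) + 1)) (by positivity)
    refine ⟨L, x, hL, fun f hf => ?_⟩
    rw [← hgint]; exact hh f hf
  choose L x hL hh using hex
  let ν : Finset (BoundedContinuousFunction (ℤ → M) ℝ) × ℕ → ProbabilityMeasure (ℤ → M) :=
    fun q => ⟨emp (N * L q) (blockPts N (x q)), emp_prob (Nat.mul_ne_zero hN.ne' (hL q)) _⟩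
  refine mem_closure_of_tendsto (f := ν) (b := atTop) ?_ (Eventually.of_forall fun q =>
    ⟨L q, x q, hL q, rfl⟩)
  rw [ProbabilityMeasure.tendsto_iff_forall_integral_tendsto]
  intro f
  have hI : ∀ q, ∫ y, f y ∂(ν q : Measure (ℤ → M)) =
      (L q : ℝ)⁻¹ * ∑ t ∈ Finset.range (L q), g f (x q t) := by
    intro q
    change ∫ y, f y ∂(emp (N * L q) (blockPts N (x q))) = _
    rw [integral_emp _ _ _ f.continuous.stronglyMeasurable]
    simp only [blockPts]
    rw [sum_range_mul (L q) (fun i s => f (shiftBy (s : ℤ) (x q i))) hN]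
    simp only [g]
    rw [← Finset.mul_sum]
    push_cast
    rw [mul_inv]; ring
  rw [Metric.tendsto_nhds]
  intro ε hε
  obtain ⟨k, hk⟩ := exists_nat_one_div_lt hε
  filter_upwards [eventually_ge_atTop (({f} : Finset _), k)] with q hq
  rw [hI, Real.dist_eq]
  refine (hh q f (hq.1 (by simp))).trans_le (le_trans ?_ hk.le)
  have : (k : ℝ) ≤ q.2 := by exact_mod_cast hq.2
  gcongr

/-- The periodic point obtained by concatenating the first `N` coordinates of `L` points. -/
def perPt (N L : ℕ) (x : ℕ → ℤ → M) : ℤ → M := fun j =>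
  x ((j % ((N * L : ℕ) : ℤ)).toNat / N) (((j % ((N * L : ℕ) : ℤ)).toNat % N : ℕ) : ℤ)

lemma perPt_periodic (N L : ℕ) (x : ℕ → ℤ → M) (t : ℤ) :
    shiftBy (t + ((N * L : ℕ) : ℤ)) (perPt N L x) = shiftBy t (perPt N L x) := by
  funext i
  simp only [shiftBy, perPt]
  rw [← add_assoc, Int.add_emod_right]

lemma perPt_periodic' (N L : ℕ) (x : ℕ → ℤ → M) (t k : ℤ) :
    shiftBy (t + ((N * L : ℕ) : ℤ) * k) (perPt N L x) = shiftBy t (perPt N L x) := by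
  funext i
  simp only [shiftBy, perPt]
  rw [← add_assoc, Int.add_mul_emod_self_left]

lemma perPt_agree {N L : ℕ} (x : ℕ → ℤ → M) {t : ℕ} (ht : t < N * L) {m : ℕ}
    (h1 : m ≤ t % N) (h2 : t % N + m < N) {j : ℤ} (hj : |j| ≤ m) :
    shiftBy (t : ℤ) (perPt N L x) j = blockPts N x t j := by
  have hN : 0 < N := by omega
  rw [abs_le] at hj
  simp only [shiftBy, perPt, blockPts]
  obtain ⟨s, hs⟩ : ∃ s : ℕ, (s : ℤ) = j + (t % N : ℕ) := ⟨(j + (t % N : ℕ)).toNat, by omega⟩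
  have hsN : s < N := by omega
  have hdm := Nat.div_add_mod t N
  have hjt : j + (t : ℤ) = ((N * (t / N) + s : ℕ) : ℤ) := by
    have : (t : ℤ) = ((N * (t / N) : ℕ) : ℤ) + ((t % N : ℕ) : ℤ) := by exact_mod_cast hdm.symm
    push_cast at *; linarith
  have hlt : N * (t / N) + s < N * L := by
    have : t / N < L := Nat.div_lt_of_lt_mul ht
    calc N * (t / N) + s < N * (t / N) + N := by omega
      _ = N * (t / N + 1) := by ring
      _ ≤ N * L := Nat.mul_le_mul_left _ this
  have : (j + (t : ℤ)) % ((N * L : ℕ) : ℤ) = ((N * (t / N) + s : ℕ) : ℤ) := by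
    rw [hjt, ← Int.natCast_mod, Nat.mod_eq_of_lt hlt]
  rw [this, Int.toNat_natCast, Nat.mul_add_div hN, Nat.div_eq_of_lt hsN, Nat.mul_add_mod,
    Nat.mod_eq_of_lt hsN, add_zero, hs]

/-- The measure equidistributed on the periodic orbit. -/
noncomputable def perMeas (N L : ℕ) (x : ℕ → ℤ → M) : Measure (ℤ → M) :=
  emp (N * L) (fun t => shiftBy (t : ℤ) (perPt N L x))

lemma perMeas_inv {N L : ℕ} (h : N * L ≠ 0) (x : ℕ → ℤ → M) :
    (perMeas N L x).map fullShift = perMeas N L x := by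
  have : SecondCountableTopology M := UniformSpace.secondCountable_of_separable M
  have hm : Measurable (fullShift : (ℤ → M) → (ℤ → M)) := continuous_fullShift.measurable
  unfold perMeas emp
  rw [Measure.map_smul, ← Measure.mapₗ_apply_of_measurable hm, map_sum]
  congr 1
  have hp := perPt_periodic N L x
  generalize perPt N L x = p at *
  generalize N * L = P at *
  obtain ⟨Q, rfl⟩ := Nat.exists_eq_succ_of_ne_zero h
  simp only [Measure.mapₗ_apply_of_measurable hm, Measure.map_dirac' hm, fullShift_shiftBy]
  rw [Nat.succ_eq_add_one, Finset.sum_range_succ', Finset.sum_range_succ]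
  congr 1
  · refine Finset.sum_congr rfl fun t _ => ?_
    congr 2; push_cast; ring
  · rw [← hp]
    congr 2; push_cast; ring

lemma perMeas_rate {N L : ℕ} (h : N * L ≠ 0) (x : ℕ → ℤ → M) :
    ∀ᵐ p ∂((perMeas N L x).prod (perMeas N L x)),
      lowerWaitRate shiftDist fullShift p.1 p.2 = 0 := by
  have : SecondCountableTopology M := UniformSpace.secondCountable_of_separable M
  have := emp_prob h (fun t => shiftBy (t : ℤ) (perPt N L x))
  have : IsProbabilityMeasure (perMeas N L x) := this
  let O : Set (ℤ → M) := (fun t : ℕ => shiftBy (t : ℤ) (perPt N L x)) '' (Set.Iio (N * L))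
  have hO : ∀ᵐ y ∂(perMeas N L x), y ∈ O :=
    ae_emp _ _ _ ((Set.finite_Iio _).image _).measurableSet fun t ht => ⟨t, ht, rfl⟩
  filter_upwards [Measure.quasiMeasurePreserving_fst.ae hO,
    Measure.quasiMeasurePreserving_snd.ae hO] with p h1 h2
  obtain ⟨a, ha, ha'⟩ := h1
  obtain ⟨b, hb, hb'⟩ := h2
  simp only [Set.mem_Iio] at ha hb
  refine rate_zero_of_hit _ _ _ _ (shiftDist_self _) (n := a + N * L - b) (by omega) ?_
  rw [← ha', ← hb', fullShift_iterate_shiftBy, ← perPt_periodic]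
  congr 1
  omega

lemma unif_agree (f : (ℤ → M) → ℝ) (hf : UniformContinuous f) {ε : ℝ} (hε : 0 < ε) :
    ∃ m : ℕ, ∀ u v : ℤ → M, (∀ j : ℤ, |j| ≤ m → u j = v j) → |f u - f v| < ε := by
  have h := hf (Metric.dist_mem_uniformity hε)
  rw [Filter.mem_map, Pi.uniformity, Filter.mem_iInf] at h
  obtain ⟨I, hI, V, hV, hVe⟩ := h
  obtain ⟨m, hm⟩ : ∃ m : ℕ, ∀ j ∈ I, |j| ≤ m := by
    obtain ⟨b, hb⟩ := (hI.image fun j : ℤ => j.natAbs).bddAbove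
    refine ⟨b, fun j hj => ?_⟩
    have : j.natAbs ≤ b := hb ⟨j, hj, rfl⟩
    rw [Int.abs_eq_natAbs]
    exact_mod_cast this
  refine ⟨m, fun u v huv => ?_⟩
  have : (u, v) ∈ (fun x : (ℤ → M) × (ℤ → M) => (f x.1, f x.2)) ⁻¹' {p | dist p.1 p.2 < ε} := by
    rw [hVe, mem_iInter]
    intro i
    obtain ⟨W, hW, hWV⟩ := Filter.mem_comap.1 (hV i)
    apply hWV
    simp only [mem_preimage]
    rw [huv i (hm i i.2)]
    exact refl_mem_uniformity hW
  exact this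

lemma bad_sum {N m : ℕ} {ε C : ℝ} (hε : 0 ≤ ε) (hC : 0 ≤ C) :
    ∑ s ∈ Finset.range N, (if m ≤ s ∧ s + m < N then ε else C) ≤ N * ε + 2 * m * C := by
  have h1 : ∀ s ∈ Finset.range N, (if m ≤ s ∧ s + m < N then ε else C) ≤
      ε + ((if s ∈ Finset.range m then C else 0) + (if s ∈ Finset.Ico (N - m) N then C else 0)) := by
    intro s hs
    simp only [Finset.mem_range, Finset.mem_Ico] at *
    split_ifs <;> first | linarith | omega
  refine (Finset.sum_le_sum h1).trans ?_
  rw [Finset.sum_add_distrib, Finset.sum_add_distrib, ← Finset.sum_filter, ← Finset.sum_filter]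
  simp only [Finset.sum_const, nsmul_eq_mul, Finset.card_range]
  have c1 : (Finset.filter (fun s => s ∈ Finset.range m) (Finset.range N)).card ≤ m := by
    refine (Finset.card_le_card (t := Finset.range m) fun s hs => ?_).trans (by simp)
    exact (Finset.mem_filter.1 hs).2
  have c2 : (Finset.filter (fun s => s ∈ Finset.Ico (N - m) N) (Finset.range N)).card ≤ m := by
    refine (Finset.card_le_card (t := Finset.Ico (N - m) N) fun s hs => ?_).trans ?_
    · exact (Finset.mem_filter.1 hs).2
    · simp; omega
  have c1' : ((Finset.filter (fun s => s ∈ Finset.range m) (Finset.range N)).card : ℝ) ≤ m := by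
    exact_mod_cast c1
  have c2' : ((Finset.filter (fun s => s ∈ Finset.Ico (N - m) N) (Finset.range N)).card : ℝ) ≤ m := by
    exact_mod_cast c2
  nlinarith

lemma integral_diff (f : (ℤ → M) → ℝ) (hfm : StronglyMeasurable f) {C ε : ℝ} (hC : 0 ≤ C)
    (hε : 0 ≤ ε) (hfC : ∀ u v, |f u - f v| ≤ C) {m : ℕ}
    (hm : ∀ u v : ℤ → M, (∀ j : ℤ, |j| ≤ m → u j = v j) → |f u - f v| < ε)
    {N L : ℕ} (hN : 0 < N) (hL : L ≠ 0) (x : ℕ → ℤ → M) :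
    |∫ y, f y ∂(perMeas N L x) - ∫ y, f y ∂(emp (N * L) (blockPts N x))|
      ≤ ε + 2 * m * C * (N : ℝ)⁻¹ := by
  unfold perMeas
  rw [integral_emp _ _ _ hfm, integral_emp _ _ _ hfm, ← mul_sub, ← Finset.sum_sub_distrib, abs_mul]
  have hNL : (0 : ℝ) ≤ ((N * L : ℕ) : ℝ)⁻¹ := by positivity
  rw [abs_of_nonneg hNL]
  have hb : |∑ t ∈ Finset.range (N * L), (f (shiftBy (t : ℤ) (perPt N L x)) - f (blockPts N x t))|
      ≤ L * (N * ε + 2 * m * C) := by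
    refine (Finset.abs_sum_le_sum_abs _ _).trans ?_
    calc _ ≤ ∑ t ∈ Finset.range (N * L),
          (fun _ s => if m ≤ s ∧ s + m < N then ε else C) (t / N) (t % N) := by
          refine Finset.sum_le_sum fun t ht => ?_
          rw [Finset.mem_range] at ht
          simp only
          split_ifs with hc
          · exact (hm _ _ fun j hj => perPt_agree x ht hc.1 hc.2 hj).le
          · exact hfC _ _
      _ = _ := sum_range_mul L (fun _ s => if m ≤ s ∧ s + m < N then ε else C) hN
      _ ≤ ∑ i ∈ Finset.range L, (N * ε + 2 * m * C) := Finset.sum_le_sum fun i _ => bad_sum hε hC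
      _ = _ := by rw [Finset.sum_const, Finset.card_range, nsmul_eq_mul]
  calc _ ≤ ((N * L : ℕ) : ℝ)⁻¹ * (L * (N * ε + 2 * m * C)) := by gcongr
    _ = _ := by
      have : (N : ℝ) ≠ 0 := by exact_mod_cast hN.ne'
      have : (L : ℝ) ≠ 0 := by exact_mod_cast hL
      push_cast
      field_simp

open scoped PiCountable in
lemma tendsto_of_lip {ν : ℕ → ProbabilityMeasure (ℤ → M)} {μ : ProbabilityMeasure (ℤ → M)}
    (h : ∀ f : (ℤ → M) → ℝ, (∃ C : ℝ, ∀ x y, |f x - f y| ≤ C) → UniformContinuous f →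
      Tendsto (fun i => ∫ y, f y ∂(ν i : Measure (ℤ → M))) atTop
        (𝓝 (∫ y, f y ∂(μ : Measure (ℤ → M))))) : Tendsto ν atTop (𝓝 μ) := by
  refine tendsto_iff_forall_lipschitz_integral_tendsto.2 fun f hb hl => h f hb ?_
  obtain ⟨K, hK⟩ := hl
  exact hK.uniformContinuous

lemma dense_part :
    Dense {μ : {ν : ProbabilityMeasure (ℤ → M) // ν.toMeasure.map fullShift = ν.toMeasure} |
        ∀ᵐ p ∂(μ.1.toMeasure.prod μ.1.toMeasure),
          lowerWaitRate shiftDist fullShift p.1 p.2 = 0} := by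
  have : SecondCountableTopology M := UniformSpace.secondCountable_of_separable M
  rintro ⟨μ, hμ⟩
  let _ : MetricSpace (ProbabilityMeasure (ℤ → M)) := TopologicalSpace.metrizableSpaceMetric _
  have hex : ∀ n : ℕ, ∃ (L : ℕ) (x : ℕ → ℤ → M) (ν : ProbabilityMeasure (ℤ → M)), L ≠ 0 ∧
      (ν : Measure (ℤ → M)) = emp ((n + 1) * L) (blockPts (n + 1) x) ∧
        dist ν μ < 1 / ((n : ℝ) + 1) := by
    intro n
    obtain ⟨ν, ⟨L, x, hL, hν⟩, hd⟩ := Metric.mem_closure_iff.1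
      (integral_block μ hμ (N := n + 1) n.succ_pos) (1 / ((n : ℝ) + 1)) (by positivity)
    exact ⟨L, x, ν, hL, hν, by rwa [dist_comm]⟩
  choose L x ν hL hν hd using hex
  have hνμ : Tendsto ν atTop (𝓝 μ) := by
    rw [tendsto_iff_dist_tendsto_zero]
    exact squeeze_zero (fun _ => dist_nonneg) (fun n => (hd n).le)
      tendsto_one_div_add_atTop_nhds_zero_nat
  have hne : ∀ n, (n + 1) * L n ≠ 0 := fun n => Nat.mul_ne_zero n.succ_ne_zero (hL n)
  let ρ : ℕ → {ν : ProbabilityMeasure (ℤ → M) // ν.toMeasure.map fullShift = ν.toMeasure} :=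
    fun n => ⟨⟨perMeas (n + 1) (L n) (x n), emp_prob (hne n) _⟩, perMeas_inv (hne n) _⟩
  refine mem_closure_of_tendsto (f := ρ) (b := atTop) ?_
    (Eventually.of_forall fun n => perMeas_rate (hne n) _)
  rw [tendsto_subtype_rng]
  refine tendsto_of_lip fun f hb hu => ?_
  obtain ⟨C, hC⟩ := hb
  let f' : BoundedContinuousFunction (ℤ → M) ℝ := ⟨⟨f, hu.continuous⟩, ⟨C, hC⟩⟩
  have h1 : Tendsto (fun n => ∫ y, f y ∂(ν n : Measure (ℤ → M))) atTop
      (𝓝 (∫ y, f y ∂(μ : Measure (ℤ → M)))) :=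
    ProbabilityMeasure.tendsto_iff_forall_integral_tendsto.1 hνμ f'
  have h2 : Tendsto (fun n => ∫ y, f y ∂((ρ n).1 : Measure (ℤ → M)) -
      ∫ y, f y ∂(ν n : Measure (ℤ → M))) atTop (𝓝 0) := by
    rw [Metric.tendsto_nhds]
    intro ε hε
    obtain ⟨m, hm⟩ := unif_agree f hu (half_pos hε)
    have ht : Tendsto (fun n : ℕ => ε / 2 + 2 * m * (max C 0) * ((n + 1 : ℕ) : ℝ)⁻¹) atTop
        (𝓝 (ε / 2 + 2 * m * (max C 0) * 0)) := by
      refine tendsto_const_nhds.add (tendsto_const_nhds.mul ?_)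
      exact (tendsto_add_atTop_iff_nat 1).2 tendsto_inv_atTop_nhds_zero_nat
    filter_upwards [ht.eventually_lt_const (u := ε) (by linarith)] with n hn
    rw [Real.dist_eq, sub_zero, hν n]
    exact (integral_diff f hu.continuous.stronglyMeasurable (le_max_right C 0) (half_pos hε).le
      (fun u v => (hC u v).trans (le_max_left _ _)) hm n.succ_pos (hL n) (x n)).trans_lt hn
  simpa using h2.add h1

end

end FullShiftWait

/-- For the full shift on `ℤ → M` over a perfect Polish metric space `M`,
the set of invariant measures whose lower quantitative waiting time indicator vanishes
`(μ × μ)`-almost everywhere is a dense `Gδ` subset of `M(T)`. -/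
theorem fullShift_lowerWaitRateZero_denseGδ {M : Type*} [MetricSpace M] [CompleteSpace M]
    [TopologicalSpace.SeparableSpace M] [PerfectSpace M]
    [MeasurableSpace M] [BorelSpace M] :
    IsGδ {μ : {ν : ProbabilityMeasure (ℤ → M) // ν.toMeasure.map fullShift = ν.toMeasure} |
        ∀ᵐ p ∂(μ.1.toMeasure.prod μ.1.toMeasure),
          lowerWaitRate shiftDist fullShift p.1 p.2 = 0} ∧
    Dense {μ : {ν : ProbabilityMeasure (ℤ → M) // ν.toMeasure.map fullShift = ν.toMeasure} |
        ∀ᵐ p ∂(μ.1.toMeasure.prod μ.1.toMeasure),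
          lowerWaitRate shiftDist fullShift p.1 p.2 = 0} := by
  exact ⟨FullShiftWait.gdelta_part, FullShiftWait.dense_part⟩
end

section
/- For the full shift T on X = ∏_{n∈ℤ} M over a perfect Polish metric space M, the set {μ ∈ M(T) : R̄(x,y) = +∞ for (μ×μ)-a.e. (x,y) ∈ X×X} of invariant measures whose upper quantitative waiting time indicator is infinite (μ×μ)-almost everywhere is a residual subset of M(T). -/
open Filter MeasureTheory Topology Metric Set
open scoped ENNReal NNReal

noncomputable section
attribute [local instance] Classical.propDecidable

end

theorem summable_half_natAbs : Summable (fun n : ℤ => (1 / 2 : ℝ) ^ n.natAbs) := by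
  apply Summable.of_nat_of_neg
  · simpa using summable_geometric_two
  · simpa using summable_geometric_two

theorem ratio_nonneg {M : Type*} [MetricSpace M] (a b : M) :
    0 ≤ dist a b / (1 + dist a b) := by positivity

theorem ratio_le_one {M : Type*} [MetricSpace M] (a b : M) :
    dist a b / (1 + dist a b) ≤ 1 := by
  rw [div_le_one (by positivity)]
  linarith

theorem shiftDist_term_norm_le {M : Type*} [MetricSpace M] (n : ℤ) (a b : M) :
    ‖(1 / 2 : ℝ) ^ n.natAbs * (dist a b / (1 + dist a b))‖ ≤ (1 / 2 : ℝ) ^ n.natAbs := by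
  rw [Real.norm_of_nonneg (by positivity)]
  exact mul_le_of_le_one_right (by positivity) (ratio_le_one a b)

theorem continuous_shiftDist {M : Type*} [MetricSpace M] :
    Continuous (fun p : (ℤ → M) × (ℤ → M) => shiftDist p.1 p.2) := by
  unfold shiftDist
  refine continuous_tsum (fun n => ?_) summable_half_natAbs
    (fun n p => shiftDist_term_norm_le n (p.1 n) (p.2 n))
  refine continuous_const.mul (Continuous.div (by fun_prop) (by fun_prop) (fun p => ?_))
  positivity

theorem le_shiftDist {M : Type*} [MetricSpace M] (x y : ℤ → M) :
    dist (x 0) (y 0) / (1 + dist (x 0) (y 0)) ≤ shiftDist x y := by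
  have hs : Summable (fun n : ℤ =>
      (1 / 2 : ℝ) ^ n.natAbs * (dist (x n) (y n) / (1 + dist (x n) (y n)))) :=
    Summable.of_norm_bounded summable_half_natAbs
      (fun n => shiftDist_term_norm_le n (x n) (y n))
  have := hs.le_tsum (0 : ℤ) (fun n _ => by positivity)
  simpa [shiftDist] using this

theorem continuous_fullShift {M : Type*} [TopologicalSpace M] :
    Continuous (fullShift : (ℤ → M) → (ℤ → M)) := by
  unfold fullShift
  fun_prop

theorem measurable_fullShift {M : Type*} [MeasurableSpace M] :
    Measurable (fullShift : (ℤ → M) → (ℤ → M)) := by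
  unfold fullShift
  fun_prop

theorem fullShift_iterate_apply {M : Type*} (n : ℕ) (x : ℤ → M) (i : ℤ) :
    (fullShift^[n] x) i = x (i - n) := by
  induction n generalizing x i with
  | zero => simp
  | succ n ih =>
    rw [Function.iterate_succ_apply, ih]
    simp only [fullShift]
    congr 1
    push_cast
    ring

/-- Pairs with a late entrance at some small scale. -/
def lateSet (M : Type*) [MetricSpace M] (N : ℕ) : Set ((ℤ → M) × (ℤ → M)) :=
  ⋃ r ∈ Set.Ioo (0 : ℝ) (1 / (N + 2)), ⋂ n ∈ {n : ℕ | 1 ≤ n ∧ (n : ℝ) ≤ (1 / r) ^ N},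
    {p | r < shiftDist (fullShift^[n] p.1) p.2}

theorem isOpen_lateSet (M : Type*) [MetricSpace M] (N : ℕ) : IsOpen (lateSet M N) := by
  refine isOpen_biUnion (fun r _ => Set.Finite.isOpen_biInter ?_ (fun n _ => ?_))
  · refine (Set.finite_Iic ⌊(1 / r) ^ N⌋₊).subset ?_
    rintro n ⟨_, hn⟩
    exact Nat.le_floor hn
  · refine isOpen_lt continuous_const ?_
    exact continuous_shiftDist.comp
      (((continuous_fullShift.iterate n).comp continuous_fst).prodMk continuous_snd)

theorem upperWaitRate_eq_top_of_late {M : Type*} [MetricSpace M] (p : (ℤ → M) × (ℤ → M))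
    (h : ∀ N, p ∈ lateSet M N) : upperWaitRate shiftDist fullShift p.1 p.2 = ⊤ := by
  refine ENNReal.eq_top_of_forall_nnreal_le (fun C => ?_)
  obtain ⟨K, hK⟩ := exists_nat_ge C
  refine le_limsup_of_frequently_le ?_
  rw [frequently_iff]
  intro U hU
  obtain ⟨ε, hε, hεU⟩ := mem_nhdsGT_iff_exists_Ioo_subset.1 hU
  obtain ⟨L, hL⟩ := exists_nat_ge (1 / ε)
  have hε' : 0 < ε := hε
  have hN := h (max K L)
  set N := max K L with hNdef
  simp only [lateSet, mem_iUnion, mem_iInter] at hN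
  obtain ⟨r, ⟨hr0, hr1⟩, hr⟩ := hN
  have hLN : (L : ℝ) ≤ N := by exact_mod_cast le_max_right K L
  have hKN : (K : ℝ) ≤ N := by exact_mod_cast le_max_left K L
  have hNpos : (0 : ℝ) ≤ N := by positivity
  have hrε : r < ε := by
    refine hr1.trans_le ?_
    rw [div_le_iff₀ (by positivity)]
    have : 1 ≤ L * ε := by rwa [div_le_iff₀ hε'] at hL
    nlinarith
  have hr1' : r < 1 := hr1.trans_le (by rw [div_le_one (by positivity)]; linarith)
  refine ⟨r, hεU ⟨hr0, hrε⟩, ?_⟩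
  unfold waitRatio
  split_ifs with hex
  · set τ := sInf {n : ℕ | 1 ≤ n ∧ shiftDist (fullShift^[n] p.1) p.2 ≤ r} with hτ
    have hmem : 1 ≤ τ ∧ shiftDist (fullShift^[τ] p.1) p.2 ≤ r := Nat.sInf_mem hex
    have hlt : (1 / r) ^ N < (τ : ℝ) := by
      by_contra hcon
      have := hr τ ⟨hmem.1, not_lt.1 hcon⟩
      exact absurd hmem.2 (not_le.2 this)
    have hlog : N * (- Real.log r) ≤ Real.log τ := by
      have := Real.log_le_log (by positivity) hlt.le
      simpa [Real.log_pow, Real.log_inv] using this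
    have hneg : 0 < - Real.log r := by
      have := Real.log_neg hr0 hr1'
      linarith
    have : (C : ℝ) ≤ Real.log τ / (- Real.log r) := by
      rw [le_div_iff₀ hneg]
      refine le_trans (mul_le_mul_of_nonneg_right ?_ hneg.le) hlog
      have : (C : ℝ) ≤ K := by exact_mod_cast hK
      linarith
    rw [← ENNReal.ofReal_coe_nnreal]
    exact ENNReal.ofReal_le_ofReal this
  · exact le_top

/-- Coordinatewise application. -/
def coordMap {M : Type*} (φ : M → M) (x : ℤ → M) : ℤ → M := fun i => φ (x i)

theorem measurable_coordMap {M : Type*} [MeasurableSpace M] {φ : M → M} (h : Measurable φ) :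
    Measurable (coordMap φ) := by
  unfold coordMap
  fun_prop

theorem exists_disjoint_simple {M : Type*} [MetricSpace M] [PerfectSpace M]
    [MeasurableSpace M] (s : SimpleFunc M M) {ε : ℝ} (hε : 0 < ε) :
    ∃ φ : ℕ → SimpleFunc M M, (∀ n x, dist (φ n x) (s x) < ε) ∧
      Pairwise (fun m n => Disjoint (range (φ m)) (range (φ n))) := by
  have : Std.Symm (fun f g : SimpleFunc M M => Disjoint (range f) (range g)) :=
    ⟨fun f g h => h.symm⟩
  obtain ⟨φ, h1, h2⟩ := exists_seq_of_forall_finset_exists'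
    (fun f : SimpleFunc M M => ∀ x, dist (f x) (s x) < ε)
    (fun f g => Disjoint (range f) (range g)) (by
      intro F _
      have hA : (⋃ f ∈ F, range (f : SimpleFunc M M)).Finite :=
        F.finite_toSet.biUnion (fun f _ => f.finite_range)
      have hψ : ∀ p : M, ∃ q, dist q p < ε ∧ q ∉ ⋃ f ∈ F, range (f : SimpleFunc M M) := by
        intro p
        have : (𝓝[≠] p).NeBot := inferInstance
        have hinf := infinite_of_mem_nhds p (Metric.ball_mem_nhds p hε)
        obtain ⟨q, hq, hq'⟩ := hinf.exists_notMem_finite hA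
        exact ⟨q, hq, hq'⟩
      choose ψ hψ1 hψ2 using hψ
      refine ⟨s.map ψ, fun x => hψ1 _, fun f hf => ?_⟩
      rw [Set.disjoint_right]
      rintro _ ⟨x, rfl⟩ hx
      exact hψ2 (s x) (mem_biUnion hf hx))
  exact ⟨φ, h1, h2⟩

/-- The average of the coordinatewise push-forwards of `μ`. -/
noncomputable def avgMeasure {M : Type*} [MeasurableSpace M] (φ : ℕ → SimpleFunc M M) (k : ℕ)
    (μ : Measure (ℤ → M)) : Measure (ℤ → M) :=
  ∑ i ∈ Finset.range k, (k : ℝ≥0∞)⁻¹ • μ.map (coordMap (φ i))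

theorem avgMeasure_apply {M : Type*} [MeasurableSpace M] (φ : ℕ → SimpleFunc M M) (k : ℕ)
    (μ : Measure (ℤ → M)) (A : Set (ℤ → M)) (hA : MeasurableSet A) :
    avgMeasure φ k μ A = ∑ i ∈ Finset.range k, (k : ℝ≥0∞)⁻¹ * μ (coordMap (φ i) ⁻¹' A) := by
  simp only [avgMeasure, Measure.coe_finsetSum, Finset.sum_apply, Measure.smul_apply, smul_eq_mul]
  refine Finset.sum_congr rfl (fun i _ => ?_)
  rw [Measure.map_apply (measurable_coordMap (φ i).measurable) hA]

theorem isProbabilityMeasure_avgMeasure {M : Type*} [MeasurableSpace M]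
    (φ : ℕ → SimpleFunc M M) {k : ℕ} (hk : k ≠ 0) (μ : Measure (ℤ → M))
    [IsProbabilityMeasure μ] : IsProbabilityMeasure (avgMeasure φ k μ) := by
  constructor
  rw [avgMeasure_apply _ _ _ _ MeasurableSet.univ]
  simp only [preimage_univ, measure_univ, mul_one, Finset.sum_const, Finset.card_range,
    nsmul_eq_mul]
  exact ENNReal.mul_inv_cancel (by exact_mod_cast hk) (ENNReal.natCast_ne_top k)

theorem avgMeasure_invariant {M : Type*} [MeasurableSpace M]
    (φ : ℕ → SimpleFunc M M) (k : ℕ) (μ : Measure (ℤ → M)) (hμ : μ.map fullShift = μ) :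
    (avgMeasure φ k μ).map fullShift = avgMeasure φ k μ := by
  ext A hA
  rw [Measure.map_apply measurable_fullShift hA, avgMeasure_apply _ _ _ _ hA,
    avgMeasure_apply _ _ _ _ (measurable_fullShift hA)]
  refine Finset.sum_congr rfl (fun i _ => ?_)
  congr 1
  have : coordMap (φ i) ⁻¹' (fullShift ⁻¹' A) = fullShift ⁻¹' (coordMap (φ i) ⁻¹' A) := rfl
  rw [this, ← Measure.map_apply measurable_fullShift
    (measurable_coordMap (φ i).measurable hA), hμ]

theorem late_of_disjoint {M : Type*} [MetricSpace M] {F G : Set M} (hF : F.Finite)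
    (hG : G.Finite) (hFG : Disjoint F G) (N : ℕ) (x y : ℤ → M) (hx : ∀ i, x i ∈ F)
    (hy : ∀ i, y i ∈ G) : (x, y) ∈ lateSet M N := by
  have hpos : ∃ δ > 0, ∀ a ∈ F, ∀ b ∈ G, δ ≤ dist a b / (1 + dist a b) := by
    have hfin := (hF.prod hG).image (fun p : M × M => dist p.1 p.2 / (1 + dist p.1 p.2))
    obtain ⟨p, hp, hmin⟩ := (hF.prod hG).exists_minimalFor
      (fun p : M × M => dist p.1 p.2 / (1 + dist p.1 p.2)) _ ⟨(x 0, y 0), hx 0, hy 0⟩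
    have hne : p.1 ≠ p.2 := fun h => Set.disjoint_left.1 hFG hp.1 (h ▸ hp.2)
    have := dist_pos.2 hne
    refine ⟨dist p.1 p.2 / (1 + dist p.1 p.2), by positivity, fun a ha b hb => ?_⟩
    rcases le_total (dist p.1 p.2 / (1 + dist p.1 p.2)) (dist a b / (1 + dist a b)) with h | h
    · exact h
    · exact hmin (j := (a, b)) ⟨ha, hb⟩ h
  obtain ⟨δ, hδ, hsep⟩ := hpos
  simp only [lateSet, mem_iUnion, mem_iInter]
  have hm : 0 < min δ (1 / ((N : ℝ) + 2)) := lt_min hδ (by positivity)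
  refine ⟨min δ (1 / ((N : ℝ) + 2)) / 2, ⟨by positivity, ?_⟩, fun n _ => ?_⟩
  · exact (half_lt_self hm).trans_le (min_le_right _ _)
  · refine (half_lt_self hm).trans_le ((min_le_left _ _).trans (le_trans ?_ (le_shiftDist _ _)))
    refine hsep _ ?_ _ (hy 0)
    rw [fullShift_iterate_apply]
    exact hx _

theorem avgMeasure_prod_late {M : Type*} [MetricSpace M] [MeasurableSpace M] [BorelSpace M]
    (φ : ℕ → SimpleFunc M M)
    (hφ : Pairwise (fun m n => Disjoint (range (φ m)) (range (φ n))))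
    {k : ℕ} (hk : k ≠ 0) (μ : Measure (ℤ → M)) [IsProbabilityMeasure μ] (N : ℕ) :
    (avgMeasure φ k μ).prod (avgMeasure φ k μ) (lateSet M N)ᶜ ≤ (k : ℝ≥0∞)⁻¹ := by
  have := isProbabilityMeasure_avgMeasure φ hk μ
  set ν := avgMeasure φ k μ with hν
  set A : ℕ → Set (ℤ → M) := fun i => {x | ∀ j, x j ∈ range (φ i)} with hA
  have hAm : ∀ i, MeasurableSet (A i) := fun i => by
    simp only [hA, ofPred_forall]
    exact MeasurableSet.iInter (fun j => (φ i).finite_range.measurableSet.preimage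
      (measurable_pi_apply j))
  have hself : ∀ i, coordMap (φ i) ⁻¹' (A i) = univ := fun i =>
    eq_univ_of_forall (fun x j => ⟨x j, rfl⟩)
  have hother : ∀ i j, i ≠ j → coordMap (φ j) ⁻¹' (A i) = ∅ := fun i j hij =>
    eq_empty_of_forall_notMem (fun x hx =>
      Set.disjoint_left.1 (hφ hij) (hx 0) ⟨x 0, rfl⟩)
  have hνA : ∀ i ∈ Finset.range k, ν (A i) = (k : ℝ≥0∞)⁻¹ := fun i hi => by
    rw [hν, avgMeasure_apply _ _ _ _ (hAm i), Finset.sum_eq_single i]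
    · simp [hself]
    · intro j _ hji
      simp [hother i j hji.symm]
    · exact fun h => absurd hi h
  set B : Set (ℤ → M) := ⋃ i ∈ Finset.range k, A i with hB
  have hBm : MeasurableSet B := Finset.measurableSet_biUnion _ (fun i _ => hAm i)
  have hνB : ν Bᶜ = 0 := by
    rw [hν, avgMeasure_apply _ _ _ _ hBm.compl]
    refine Finset.sum_eq_zero (fun i hi => ?_)
    have : coordMap (φ i) ⁻¹' Bᶜ = ∅ := by
      refine eq_empty_of_forall_notMem (fun x hx => hx ?_)
      exact mem_biUnion hi (fun j => ⟨x j, rfl⟩)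
    simp [this]
  have hsub : (lateSet M N)ᶜ ⊆
      (Bᶜ ×ˢ univ ∪ univ ×ˢ Bᶜ) ∪ ⋃ i ∈ Finset.range k, A i ×ˢ A i := by
    rintro ⟨x, y⟩ hxy
    by_cases hx : x ∈ B
    · by_cases hy : y ∈ B
      · right
        simp only [hB, mem_iUnion] at hx hy
        obtain ⟨i, hi, hxi⟩ := hx
        obtain ⟨j, hj, hyj⟩ := hy
        by_cases hij : i = j
        · subst hij
          exact mem_biUnion hi ⟨hxi, hyj⟩
        · exact absurd (late_of_disjoint (φ i).finite_range (φ j).finite_range (hφ hij) N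
            x y hxi hyj) hxy
      · exact Or.inl (Or.inr ⟨trivial, hy⟩)
    · exact Or.inl (Or.inl ⟨hx, trivial⟩)
  calc ν.prod ν (lateSet M N)ᶜ
      ≤ ν.prod ν ((Bᶜ ×ˢ univ ∪ univ ×ˢ Bᶜ) ∪ ⋃ i ∈ Finset.range k, A i ×ˢ A i) :=
        measure_mono hsub
    _ ≤ (ν.prod ν (Bᶜ ×ˢ univ) + ν.prod ν (univ ×ˢ Bᶜ)) +
        ∑ i ∈ Finset.range k, ν.prod ν (A i ×ˢ A i) :=
        (measure_union_le _ _).trans (add_le_add (measure_union_le _ _)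
          (measure_biUnion_finset_le _ _))
    _ = ∑ i ∈ Finset.range k, (k : ℝ≥0∞)⁻¹ * (k : ℝ≥0∞)⁻¹ := by
        simp only [Measure.prod_prod, hνB, zero_mul, mul_zero, add_zero, zero_add]
        exact Finset.sum_congr rfl (fun i hi => by rw [hνA i hi])
    _ = (k : ℝ≥0∞)⁻¹ := by
        rw [Finset.sum_const, Finset.card_range, nsmul_eq_mul, ← mul_assoc,
          ENNReal.mul_inv_cancel (by exact_mod_cast hk) (ENNReal.natCast_ne_top k), one_mul]

theorem integral_avgMeasure_tendsto {M : Type*} [MetricSpace M]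
    [TopologicalSpace.SeparableSpace M] [MeasurableSpace M] [BorelSpace M]
    (φ : ℕ → ℕ → SimpleFunc M M) (hφ : ∀ i x, Tendsto (fun m => φ m i x) atTop (𝓝 x))
    {k : ℕ} (hk : k ≠ 0) (μ : Measure (ℤ → M)) [IsProbabilityMeasure μ]
    (f : BoundedContinuousFunction (ℤ → M) ℝ) :
    Tendsto (fun m => ∫ x, f x ∂(avgMeasure (φ m) k μ)) atTop (𝓝 (∫ x, f x ∂μ)) := by
  have : SecondCountableTopology M := UniformSpace.secondCountable_of_separable M
  have hint : ∀ m, ∫ x, f x ∂(avgMeasure (φ m) k μ) =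
      ∑ i ∈ Finset.range k, (k : ℝ)⁻¹ * ∫ x, f (coordMap (φ m i) x) ∂μ := fun m => by
    have hmeas := fun i => measurable_coordMap (φ m i).measurable
    rw [avgMeasure, integral_finsetSum_measure]
    · refine Finset.sum_congr rfl (fun i _ => ?_)
      rw [integral_smul_measure, integral_map (hmeas i).aemeasurable
        f.continuous.measurable.aestronglyMeasurable]
      simp
    · intro i _
      have := Measure.isProbabilityMeasure_map (μ := μ) (hmeas i).aemeasurable
      exact (f.integrable _).smul_measure (by simpa using hk)
  simp only [hint]
  have hlim : ∀ i, Tendsto (fun m => ∫ x, f (coordMap (φ m i) x) ∂μ) atTop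
      (𝓝 (∫ x, f x ∂μ)) := fun i => by
    refine tendsto_integral_of_dominated_convergence (fun _ => ‖f‖) (fun m => ?_)
      (integrable_const _) (fun m => ?_) ?_
    · exact (f.continuous.measurable.comp
        (measurable_coordMap (φ m i).measurable)).aestronglyMeasurable
    · exact Eventually.of_forall (fun x => f.norm_coe_le_norm _)
    · refine Eventually.of_forall (fun x => ?_)
      refine (f.continuous.tendsto x).comp ?_
      exact tendsto_pi_nhds.2 (fun j => hφ i (x j))
  have := tendsto_finsetSum (Finset.range k) (fun i _ => (hlim i).const_mul ((k : ℝ)⁻¹))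
  convert this using 2
  rw [Finset.sum_const, Finset.card_range, nsmul_eq_mul, ← mul_assoc,
    mul_inv_cancel₀ (by exact_mod_cast hk), one_mul]

theorem exists_approx {M : Type*} [MetricSpace M] [Nonempty M]
    [TopologicalSpace.SeparableSpace M] [PerfectSpace M] [MeasurableSpace M] [BorelSpace M] :
    ∃ φ : ℕ → ℕ → SimpleFunc M M, (∀ i x, Tendsto (fun m => φ m i x) atTop (𝓝 x)) ∧
      ∀ m, Pairwise (fun i j => Disjoint (range (φ m i)) (range (φ m j))) := by
  obtain ⟨x₀⟩ := ‹Nonempty M›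
  let s : ℕ → SimpleFunc M M := SimpleFunc.approxOn id measurable_id univ x₀ (mem_univ _)
  have hs : ∀ x, Tendsto (fun m => s m x) atTop (𝓝 x) := fun x =>
    SimpleFunc.tendsto_approxOn measurable_id (mem_univ _) (by simp)
  have hex := fun m : ℕ => exists_disjoint_simple (s m) (ε := 1 / ((m : ℝ) + 1)) (by positivity)
  choose φ h1 h2 using hex
  refine ⟨φ, fun i x => ?_, h2⟩
  have h0 : Tendsto (fun m => dist (φ m i x) (s m x)) atTop (𝓝 0) :=
    squeeze_zero (fun _ => dist_nonneg) (fun m => (h1 m i x).le)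
      tendsto_one_div_add_atTop_nhds_zero_nat
  exact (tendsto_iff_of_dist (by simpa only [dist_comm] using h0)).1 (hs x)

/-- For the full shift on `ℤ → M` over a perfect Polish metric space `M`,
the set of invariant measures whose upper quantitative waiting time indicator is infinite
`(μ × μ)`-almost everywhere is a residual subset of `M(T)`. -/
theorem fullShift_upperWaitRateInfinite_residual {M : Type*} [MetricSpace M] [CompleteSpace M]
    [TopologicalSpace.SeparableSpace M] [PerfectSpace M]
    [MeasurableSpace M] [BorelSpace M] :
    {μ : {ν : ProbabilityMeasure (ℤ → M) // ν.toMeasure.map fullShift = ν.toMeasure} |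
        ∀ᵐ p ∂(μ.1.toMeasure.prod μ.1.toMeasure),
          upperWaitRate shiftDist fullShift p.1 p.2 = ⊤} ∈
      residual {ν : ProbabilityMeasure (ℤ → M) // ν.toMeasure.map fullShift = ν.toMeasure} := by
  classical
  have : SecondCountableTopology M := UniformSpace.secondCountable_of_separable M
  let I := {ν : ProbabilityMeasure (ℤ → M) // ν.toMeasure.map fullShift = ν.toMeasure}
  let U : ℕ → ℕ → Set I := fun N j =>
    {μ | μ.1.toMeasure.prod μ.1.toMeasure (lateSet M N)ᶜ < ((j : ℝ≥0∞) + 1)⁻¹}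
  have hopen : ∀ N j, IsOpen (U N j) := by
    intro N j
    rw [isOpen_iff_mem_nhds]
    intro μ hμ
    have hcont : Continuous (fun ν : I => ν.1.prod ν.1) :=
      ProbabilityMeasure.continuous_prod.comp
        (continuous_subtype_val.prodMk continuous_subtype_val)
    have hls := ProbabilityMeasure.limsup_measure_closed_le_of_tendsto (hcont.tendsto μ)
      (isOpen_lateSet M N).isClosed_compl
    exact eventually_lt_of_limsup_lt (hls.trans_lt hμ)
  have hdense : ∀ N j, Dense (U N j) := by
    intro N j μ
    have : Nonempty M := by
      obtain ⟨x⟩ := μ.1.toMeasure.nonempty_of_neZero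
      exact ⟨x 0⟩
    obtain ⟨φ, h1, h2⟩ := exists_approx (M := M)
    have hk : j + 2 ≠ 0 := by omega
    let ν : ℕ → I := fun m =>
      ⟨⟨avgMeasure (φ m) (j + 2) μ.1.toMeasure,
        isProbabilityMeasure_avgMeasure (φ m) hk _⟩,
        avgMeasure_invariant (φ m) (j + 2) _ μ.2⟩
    have hν : Tendsto ν atTop (𝓝 μ) := by
      rw [tendsto_subtype_rng, ProbabilityMeasure.tendsto_iff_forall_integral_tendsto]
      intro f
      exact integral_avgMeasure_tendsto φ h1 hk μ.1.toMeasure f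
    refine mem_closure_of_tendsto hν (Eventually.of_forall (fun m => ?_))
    refine (avgMeasure_prod_late (φ m) (h2 m) hk μ.1.toMeasure N).trans_lt ?_
    rw [ENNReal.inv_lt_inv]
    exact_mod_cast Nat.lt_succ_self (j + 1)
  have hres : (⋂ N, ⋂ j, U N j) ∈ residual I :=
    countable_iInter_mem.2 (fun N => countable_iInter_mem.2 (fun j =>
      residual_of_dense_open (hopen N j) (hdense N j)))
  refine mem_of_superset hres (fun μ hμ => ?_)
  simp only [mem_iInter] at hμ
  have hae : ∀ᵐ p ∂(μ.1.toMeasure.prod μ.1.toMeasure), ∀ N, p ∈ lateSet M N := by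
    rw [ae_all_iff]
    intro N
    rw [ae_iff]
    change μ.1.toMeasure.prod μ.1.toMeasure (lateSet M N)ᶜ = 0
    by_contra hne
    obtain ⟨j, hj⟩ := ENNReal.exists_inv_nat_lt hne
    have := (hμ N j).trans_le (ENNReal.inv_le_inv.2 (le_add_of_nonneg_right zero_le_one))
    exact absurd (this.trans hj) (lt_irrefl _)
  filter_upwards [hae] with p hp
  exact upperWaitRate_eq_top_of_late p hp
end

section
/- For the full shift T on X = ∏_{n∈ℤ} M over a perfect Polish metric space M, the set of ergodic measures μ ∈ M(T) such that, for μ-a.e. x ∈ X, R̲(x) = d̲_μ(x) = 0 and R̄(x) = d̄_μ(x) = +∞, is a residual subset of M(T). -/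
open Filter MeasureTheory Topology Metric Set
open scoped ENNReal NNReal

noncomputable section
attribute [local instance] Classical.propDecidable

end

open Filter MeasureTheory Topology Metric Set
open scoped ENNReal NNReal

namespace ShiftTypical

section Basic
variable {M : Type*} [MetricSpace M]

lemma summable_half : Summable (fun n : ℤ => (1 / 2 : ℝ) ^ n.natAbs) := by
  have h : Summable (fun n : ℕ => (1 / 2 : ℝ) ^ n) := summable_geometric_of_lt_one (by norm_num) (by norm_num)
  refine Summable.of_nat_of_neg ?_ ?_ <;> simpa using h

lemma frac_nonneg (x y : M) : 0 ≤ dist x y / (1 + dist x y) := by positivity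

lemma frac_le_one (x y : M) : dist x y / (1 + dist x y) ≤ 1 := by
  rw [div_le_one (by positivity)]; linarith

lemma term_norm_le (x y : ℤ → M) (n : ℤ) :
    ‖(1 / 2 : ℝ) ^ n.natAbs * (dist (x n) (y n) / (1 + dist (x n) (y n)))‖ ≤ (1 / 2 : ℝ) ^ n.natAbs := by
  rw [Real.norm_of_nonneg (mul_nonneg (by positivity) (frac_nonneg _ _))]
  exact mul_le_of_le_one_right (by positivity) (frac_le_one _ _)

lemma summable_term (x y : ℤ → M) :
    Summable (fun n : ℤ => (1 / 2 : ℝ) ^ n.natAbs * (dist (x n) (y n) / (1 + dist (x n) (y n)))) :=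
  Summable.of_norm_bounded summable_half (term_norm_le x y)

lemma term_le_shiftDist (x y : ℤ → M) (n : ℤ) :
    (1 / 2 : ℝ) ^ n.natAbs * (dist (x n) (y n) / (1 + dist (x n) (y n))) ≤ shiftDist x y :=
  (summable_term x y).le_tsum n (fun j _ => mul_nonneg (by positivity) (frac_nonneg _ _))

lemma continuous_shiftDist : Continuous (fun q : (ℤ → M) × (ℤ → M) => shiftDist q.1 q.2) := by
  unfold shiftDist
  refine continuous_tsum (fun n => ?_) summable_half (fun n q => term_norm_le q.1 q.2 n)
  refine continuous_const.mul (Continuous.div (by fun_prop) (by fun_prop) (fun q => by positivity))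

lemma shiftDist_self (x : ℤ → M) : shiftDist x x = 0 := by
  simp [shiftDist]

lemma dist_le_of_shiftDist {x y : ℤ → M} {L : ℕ} {e : ℝ} (he : 0 < e)
    (h : shiftDist x y ≤ (1 / 2 : ℝ) ^ L * (e / (1 + e))) {j : ℤ} (hj : j.natAbs ≤ L) :
    dist (x j) (y j) ≤ e := by
  have h1 := (term_le_shiftDist x y j).trans h
  have h2 : (1 / 2 : ℝ) ^ L ≤ (1 / 2 : ℝ) ^ j.natAbs :=
    pow_le_pow_of_le_one (by norm_num) (by norm_num) hj
  have h3 : (1 / 2 : ℝ) ^ j.natAbs * (dist (x j) (y j) / (1 + dist (x j) (y j))) ≤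
      (1 / 2 : ℝ) ^ j.natAbs * (e / (1 + e)) :=
    h1.trans (mul_le_mul_of_nonneg_right h2 (by positivity))
  have h4 := le_of_mul_le_mul_left h3 (by positivity)
  rw [div_le_div_iff₀ (by positivity) (by positivity)] at h4
  nlinarith

lemma iterate_apply {A : Type*} (n : ℕ) (x : ℤ → A) (j : ℤ) : (fullShift^[n] x) j = x (j - n) := by
  induction n generalizing x with
  | zero => simp
  | succ n ih =>
    rw [Function.iterate_succ_apply, ih]
    simp only [fullShift]
    congr 1; push_cast; ring

lemma continuous_fullShift {A : Type*} [TopologicalSpace A] : Continuous (fullShift (M := A)) := by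
  unfold fullShift; fun_prop

end Basic

section Limits

lemma liminf_zero {f : ℝ → ℝ≥0∞}
    (h : ∀ k : ℕ, ∃ r, 0 < r ∧ r < 1 / ((k : ℝ) + 1) ∧ f r ≤ ENNReal.ofReal (1 / ((k : ℝ) + 1))) :
    liminf f (𝓝[>] (0 : ℝ)) = 0 := by
  have key : ∀ k : ℕ, liminf f (𝓝[>] (0 : ℝ)) ≤ ENNReal.ofReal (1 / ((k : ℝ) + 1)) := by
    intro k
    refine liminf_le_of_frequently_le' ?_
    rw [(nhdsGT_basis (0 : ℝ)).frequently_iff]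
    intro e he
    obtain ⟨m, hm⟩ := exists_nat_one_div_lt he
    obtain ⟨r, hr, hr1, hr2⟩ := h (max k m)
    refine ⟨r, ⟨hr, hr1.trans_le (le_trans ?_ hm.le)⟩, hr2.trans (ENNReal.ofReal_le_ofReal ?_)⟩
    · exact one_div_le_one_div_of_le (by positivity) (by simp)
    · exact one_div_le_one_div_of_le (by positivity) (by simp)
  have lim : Tendsto (fun k : ℕ => ENNReal.ofReal (1 / ((k : ℝ) + 1))) atTop (𝓝 (ENNReal.ofReal 0)) :=
    ENNReal.tendsto_ofReal tendsto_one_div_add_atTop_nhds_zero_nat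
  rw [ENNReal.ofReal_zero] at lim
  exact le_antisymm (ge_of_tendsto' lim key) zero_le

lemma limsup_top {f : ℝ → ℝ≥0∞}
    (h : ∀ k : ℕ, ∃ r, 0 < r ∧ r < 1 / ((k : ℝ) + 1) ∧ ENNReal.ofReal ((k : ℝ) + 1) ≤ f r) :
    limsup f (𝓝[>] (0 : ℝ)) = ⊤ := by
  have key : ∀ k : ℕ, (k : ℝ≥0∞) ≤ limsup f (𝓝[>] (0 : ℝ)) := by
    intro k
    refine le_limsup_of_frequently_le' ?_
    rw [(nhdsGT_basis (0 : ℝ)).frequently_iff]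
    intro e he
    obtain ⟨m, hm⟩ := exists_nat_one_div_lt he
    obtain ⟨r, hr, hr1, hr2⟩ := h (max k m)
    refine ⟨r, ⟨hr, hr1.trans_le (le_trans ?_ hm.le)⟩, le_trans ?_ hr2⟩
    · exact one_div_le_one_div_of_le (by positivity) (by simp)
    · rw [← ENNReal.ofReal_natCast]
      apply ENNReal.ofReal_le_ofReal
      have : (k : ℝ) ≤ ((max k m : ℕ) : ℝ) := by exact_mod_cast le_max_left _ _
      linarith
  by_contra hne
  obtain ⟨n, hn⟩ := ENNReal.exists_nat_gt hne
  exact absurd (key n) (not_le.mpr hn)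

end Limits

section Semicont
variable {X Y : Type*} [TopologicalSpace X] [PolishSpace X] [MeasurableSpace X] [BorelSpace X]
  [TopologicalSpace Y]

lemma isOpen_lt_measure {U : Set X} (hU : IsOpen U) (c : ℝ≥0∞) :
    IsOpen {μ : ProbabilityMeasure X | c < (μ : Measure X) U} := by
  rw [isOpen_iff_mem_nhds]
  intro μ hμ
  have h := ProbabilityMeasure.le_liminf_measure_open_of_tendsto (μ := μ) (μs := id) (L := 𝓝 μ) tendsto_id hU
  exact eventually_lt_of_lt_liminf (lt_of_lt_of_le hμ h)

lemma isOpen_lt_measure_section {W : Set (Y × X)} (hW : IsOpen W) (c : ℝ≥0∞) :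
    IsOpen {q : ProbabilityMeasure X × Y | c < (q.1 : Measure X) {x | (q.2, x) ∈ W}} := by
  rw [isOpen_iff_mem_nhds]
  rintro ⟨μ, y⟩ h
  have hop : IsOpen {x | (y, x) ∈ W} := hW.preimage (by fun_prop)
  let _ := TopologicalSpace.upgradeIsCompletelyMetrizable X
  obtain ⟨K, hK, hKc, hlt⟩ := hop.exists_lt_isCompact h
  obtain ⟨u, v, hu, hv, hyu, hKv, huv⟩ := generalized_tube_lemma (isCompact_singleton (x := y)) hKc hW
    (by rintro ⟨a, b⟩ ⟨ha, hb⟩; obtain rfl : a = y := ha; exact hK hb)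
  have h1 : {ν : ProbabilityMeasure X | c < (ν : Measure X) v} ∈ 𝓝 μ :=
    (isOpen_lt_measure hv c).mem_nhds (hlt.trans_le (measure_mono hKv))
  have h2 : u ∈ 𝓝 y := hu.mem_nhds (hyu rfl)
  filter_upwards [prod_mem_nhds h1 h2] with q hq
  exact lt_of_lt_of_le hq.1 (measure_mono fun x hx => huv ⟨hq.2, hx⟩)

end Semicont
end ShiftTypical

open Filter MeasureTheory Topology Metric Set
open scoped ENNReal NNReal

namespace ShiftTypical

/-- the space of invariant measures -/
abbrev MT (M : Type*) [MeasurableSpace M] : Type _ :=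
  {ν : ProbabilityMeasure (ℤ → M) // ν.toMeasure.map fullShift = ν.toMeasure}

section Sets
variable (M : Type*) [MetricSpace M] [MeasurableSpace M]

def lowRec (k : ℕ) : Set (ProbabilityMeasure (ℤ → M) × (ℤ → M)) :=
  {q | ∃ r : ℝ, 0 < r ∧ r < 1 / ((k : ℝ) + 1) ∧ ∃ n : ℕ, 1 ≤ n ∧
    (n : ℝ) ≤ r ^ (-(1 / ((k : ℝ) + 1))) ∧ shiftDist (fullShift^[n] q.2) q.2 < r}

def upRec (k : ℕ) : Set (ProbabilityMeasure (ℤ → M) × (ℤ → M)) :=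
  {q | ∃ r : ℝ, 0 < r ∧ r < 1 / ((k : ℝ) + 1) ∧ ∀ n : ℕ, 1 ≤ n →
    (n : ℝ) ≤ (r⁻¹) ^ (k + 1) → r < shiftDist (fullShift^[n] q.2) q.2}

def lowDim (k : ℕ) : Set (ProbabilityMeasure (ℤ → M) × (ℤ → M)) :=
  {q | ∃ r : ℝ, 0 < r ∧ r < 1 / ((k : ℝ) + 1) ∧
    ENNReal.ofReal (r ^ (1 / ((k : ℝ) + 1))) < (q.1 : Measure (ℤ → M)) {y | shiftDist q.2 y < r}}

def upDim (k : ℕ) : Set (ProbabilityMeasure (ℤ → M) × (ℤ → M)) :=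
  {q | ∃ r : ℝ, 0 < r ∧ r < 1 / ((k : ℝ) + 1) ∧
    1 - ENNReal.ofReal (r ^ (k + 1)) < (q.1 : Measure (ℤ → M)) {y | r < shiftDist q.2 y}}

end Sets

section Deduce
variable {M : Type*} [MetricSpace M] [MeasurableSpace M]

lemma log_neg_of {k : ℕ} {r : ℝ} (h0 : 0 < r) (h : r < 1 / ((k : ℝ) + 1)) : Real.log r < 0 := by
  apply Real.log_neg h0
  refine h.trans_le ?_
  rw [div_le_one (by positivity)]
  have : (0 : ℝ) ≤ k := by positivity
  linarith

lemma lowerRecRate_eq {μ : ProbabilityMeasure (ℤ → M)} {x : ℤ → M} (h : ∀ k, (μ, x) ∈ lowRec M k) :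
    lowerRecRate shiftDist fullShift x = 0 := by
  refine liminf_zero fun k => ?_
  obtain ⟨r, h0, h1, n, hn, hnr, hd⟩ := h k
  refine ⟨r, h0, h1, ?_⟩
  have hl := log_neg_of h0 h1
  simp only at hd
  unfold recRatio
  rw [if_pos ⟨n, hn, hd.le⟩]
  apply ENNReal.ofReal_le_ofReal
  rw [div_le_iff₀ (by linarith)]
  have hmem : n ∈ {n : ℕ | 1 ≤ n ∧ shiftDist (fullShift^[n] x) x ≤ r} := ⟨hn, hd.le⟩
  have h2 : sInf {n : ℕ | 1 ≤ n ∧ shiftDist (fullShift^[n] x) x ≤ r} ≤ n := Nat.sInf_le hmem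
  have h3 := (Nat.sInf_mem (s := {n : ℕ | 1 ≤ n ∧ shiftDist (fullShift^[n] x) x ≤ r}) ⟨n, hmem⟩).1
  set m := sInf {n : ℕ | 1 ≤ n ∧ shiftDist (fullShift^[n] x) x ≤ r}
  have h4 : (1 : ℝ) ≤ m := by exact_mod_cast h3
  have h5 : (m : ℝ) ≤ n := by exact_mod_cast h2
  calc Real.log m ≤ Real.log (r ^ (-(1 / ((k : ℝ) + 1)))) :=
        Real.log_le_log (by linarith) (h5.trans hnr)
    _ = _ := by rw [Real.log_rpow h0]; ring

lemma upperRecRate_eq {μ : ProbabilityMeasure (ℤ → M)} {x : ℤ → M} (h : ∀ k, (μ, x) ∈ upRec M k) :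
    upperRecRate shiftDist fullShift x = ⊤ := by
  refine limsup_top fun k => ?_
  obtain ⟨r, h0, h1, hr⟩ := h k
  refine ⟨r, h0, h1, ?_⟩
  have hl := log_neg_of h0 h1
  simp only at hr
  unfold recRatio
  split_ifs with hex
  · apply ENNReal.ofReal_le_ofReal
    rw [le_div_iff₀ (by linarith)]
    have h3 := (Nat.sInf_mem (s := {n : ℕ | 1 ≤ n ∧ shiftDist (fullShift^[n] x) x ≤ r}) hex)
    set m := sInf {n : ℕ | 1 ≤ n ∧ shiftDist (fullShift^[n] x) x ≤ r}
    have h4 : (r⁻¹) ^ (k + 1) < (m : ℝ) := by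
      by_contra hc
      exact absurd h3.2 (not_le.mpr (hr m h3.1 (not_lt.mp hc)))
    have h5 := Real.log_le_log (by positivity) h4.le
    rw [Real.log_pow, Real.log_inv] at h5
    push_cast at h5
    exact h5
  · exact le_top

lemma lowerLocalDim_eq {μ : ProbabilityMeasure (ℤ → M)} {x : ℤ → M} (h : ∀ k, (μ, x) ∈ lowDim M k) :
    lowerLocalDim shiftDist (μ : Measure (ℤ → M)) x = 0 := by
  unfold lowerLocalDim
  rw [if_neg]
  · refine liminf_zero fun k => ?_
    obtain ⟨r, h0, h1, hr⟩ := h k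
    refine ⟨r, h0, h1, ?_⟩
    have hl := log_neg_of h0 h1
    simp only at hr
    apply ENNReal.ofReal_le_ofReal
    have h2 : r ^ (1 / ((k : ℝ) + 1)) < ((μ : Measure (ℤ → M)) {y | shiftDist x y < r}).toReal :=
      (ENNReal.ofReal_lt_iff_lt_toReal (by positivity) (measure_ne_top _ _)).mp hr
    have h3 := Real.log_le_log (by positivity) h2.le
    rw [Real.log_rpow h0] at h3
    rw [div_le_iff_of_neg hl]
    exact h3
  · rintro ⟨e, he, hz⟩
    obtain ⟨m, hm⟩ := exists_nat_one_div_lt he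
    obtain ⟨r, h0, h1, hr⟩ := h m
    have : (μ : Measure (ℤ → M)) {y | shiftDist x y < r} = 0 :=
      measure_mono_null (fun y (hy : shiftDist x y < r) => hy.trans (h1.trans hm)) hz
    simp only [this] at hr
    exact absurd hr (by simp)

lemma upperLocalDim_eq [SecondCountableTopology M] [BorelSpace M]
    {μ : ProbabilityMeasure (ℤ → M)} {x : ℤ → M} (h : ∀ k, (μ, x) ∈ upDim M k) :
    upperLocalDim shiftDist (μ : Measure (ℤ → M)) x = ⊤ := by
  unfold upperLocalDim
  split_ifs with hex
  · rfl
  · push Not at hex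
    refine limsup_top fun k => ?_
    obtain ⟨r, h0, h1, hr⟩ := h k
    refine ⟨r, h0, h1, ?_⟩
    have hl := log_neg_of h0 h1
    simp only at hr
    have hop : IsOpen {y | r < shiftDist x y} :=
      isOpen_lt continuous_const (continuous_shiftDist.comp (by fun_prop : Continuous fun y => (x, y)))
    have h2 : (μ : Measure (ℤ → M)) {y | shiftDist x y < r} ≤ ENNReal.ofReal (r ^ (k + 1)) := by
      refine (measure_mono (t := {y | r < shiftDist x y}ᶜ) ?_).trans ?_
      · intro y (hy : shiftDist x y < r)
        simp [hy.le]
      · rw [prob_compl_eq_one_sub hop.measurableSet]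
        exact tsub_le_iff_tsub_le.mp hr.le
    have h3 : ((μ : Measure (ℤ → M)) {y | shiftDist x y < r}).toReal ≤ r ^ (k + 1) :=
      ENNReal.toReal_le_of_le_ofReal (by positivity) h2
    have h4 : 0 < ((μ : Measure (ℤ → M)) {y | shiftDist x y < r}).toReal :=
      ENNReal.toReal_pos (hex r h0) (measure_ne_top _ _)
    apply ENNReal.ofReal_le_ofReal
    rw [le_div_iff_of_neg hl]
    have h5 := Real.log_le_log h4 h3
    rw [Real.log_pow] at h5
    push_cast at h5
    exact h5

end Deduce

section Open
variable {M : Type*} [MetricSpace M] [CompleteSpace M] [TopologicalSpace.SeparableSpace M]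
  [MeasurableSpace M] [BorelSpace M]

lemma continuous_ret (n : ℕ) : Continuous fun q : ProbabilityMeasure (ℤ → M) × (ℤ → M) =>
    shiftDist (fullShift^[n] q.2) q.2 :=
  continuous_shiftDist.comp (((continuous_fullShift.iterate n).comp continuous_snd).prodMk continuous_snd)

lemma isOpen_lowRec (k : ℕ) : IsOpen (lowRec M k) := by
  have : lowRec M k = ⋃ (r : ℝ) (_ : 0 < r) (_ : r < 1 / ((k : ℝ) + 1)) (n : ℕ) (_ : 1 ≤ n)
    (_ : (n : ℝ) ≤ r ^ (-(1 / ((k : ℝ) + 1)))), {q | shiftDist (fullShift^[n] q.2) q.2 < r} := by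
    ext q; simp only [lowRec, mem_iUnion, mem_iInter, mem_ofPred_eq, exists_prop, and_imp]
  rw [this]
  iterate 6 refine isOpen_iUnion fun _ => ?_
  exact isOpen_lt (continuous_ret _) continuous_const

lemma isOpen_upRec (k : ℕ) : IsOpen (upRec M k) := by
  have : upRec M k = ⋃ (r : ℝ) (_ : 0 < r) (_ : r < 1 / ((k : ℝ) + 1)),
      ⋂ n ∈ {n : ℕ | 1 ≤ n ∧ (n : ℝ) ≤ (r⁻¹) ^ (k + 1)}, {q | r < shiftDist (fullShift^[n] q.2) q.2} := by
    ext q; simp only [upRec, mem_iUnion, mem_iInter, mem_ofPred_eq, exists_prop, and_imp]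
  rw [this]
  iterate 3 refine isOpen_iUnion fun _ => ?_
  refine Set.Finite.isOpen_biInter ?_ (fun n _ => isOpen_lt continuous_const (continuous_ret _))
  refine (Set.finite_Iic (⌊(_ : ℝ)⌋₊)).subset (fun n hn => Nat.le_floor hn.2)

lemma isOpen_lowDim (k : ℕ) : IsOpen (lowDim M k) := by
  have : lowDim M k = ⋃ (r : ℝ) (_ : 0 < r) (_ : r < 1 / ((k : ℝ) + 1)),
      {q | ENNReal.ofReal (r ^ (1 / ((k : ℝ) + 1))) <
        (q.1 : Measure (ℤ → M)) {y | (q.2, y) ∈ {p : (ℤ → M) × (ℤ → M) | shiftDist p.1 p.2 < r}}} := by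
    ext q; simp only [lowDim, mem_iUnion, mem_iInter, mem_ofPred_eq, exists_prop, and_imp]
  rw [this]
  iterate 3 refine isOpen_iUnion fun _ => ?_
  exact isOpen_lt_measure_section (isOpen_lt continuous_shiftDist continuous_const) _

lemma isOpen_upDim (k : ℕ) : IsOpen (upDim M k) := by
  have : upDim M k = ⋃ (r : ℝ) (_ : 0 < r) (_ : r < 1 / ((k : ℝ) + 1)),
      {q | 1 - ENNReal.ofReal (r ^ (k + 1)) <
        (q.1 : Measure (ℤ → M)) {y | (q.2, y) ∈ {p : (ℤ → M) × (ℤ → M) | r < shiftDist p.1 p.2}}} := by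
    ext q; simp only [upDim, mem_iUnion, mem_iInter, mem_ofPred_eq, exists_prop, and_imp]
  rw [this]
  iterate 3 refine isOpen_iUnion fun _ => ?_
  exact isOpen_lt_measure_section (isOpen_lt continuous_const continuous_shiftDist) _

/-- invariant measures giving mass larger than `c` to the section of `W` -/
def good (W : Set (ProbabilityMeasure (ℤ → M) × (ℤ → M))) (c : ℝ≥0∞) : Set (MT M) :=
  {μ | c < (μ.1 : Measure (ℤ → M)) {x | (μ.1, x) ∈ W}}

lemma isOpen_good {W : Set (ProbabilityMeasure (ℤ → M) × (ℤ → M))} (hW : IsOpen W) (c : ℝ≥0∞) :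
    IsOpen (good W c) :=
  (isOpen_lt_measure_section hW c).preimage
    (by fun_prop : Continuous fun μ : MT M => (μ.1, μ.1))

lemma ae_residual {W : Set (ProbabilityMeasure (ℤ → M) × (ℤ → M))} (hW : IsOpen W)
    (hd : ∀ c < 1, Dense (good W c)) :
    ∀ᶠ μ in residual (MT M), ∀ᵐ x ∂(μ.1 : Measure (ℤ → M)), (μ.1, x) ∈ W := by
  have h : ∀ m : ℕ, ∀ᶠ μ in residual (MT M), μ ∈ good W (1 - ((m : ℝ≥0∞) + 1)⁻¹) := fun m =>
    residual_of_dense_open (isOpen_good hW _) (hd _ (ENNReal.sub_lt_self (by simp) (by simp) (by simp)))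
  filter_upwards [eventually_countable_forall.mpr h] with μ hμ
  have hop : IsOpen {x | (μ.1, x) ∈ W} := hW.preimage (by fun_prop)
  have h1 : (μ.1 : Measure (ℤ → M)) {x | (μ.1, x) ∈ W} = 1 := by
    refine le_antisymm prob_le_one ?_
    have lim : Tendsto (fun m : ℕ => 1 - ((m : ℝ≥0∞) + 1)⁻¹) atTop (𝓝 (1 - 0)) := by
      refine ENNReal.Tendsto.sub tendsto_const_nhds ?_ (by simp)
      have := (tendsto_add_atTop_iff_nat 1).mpr ENNReal.tendsto_inv_nat_nhds_zero
      simpa using this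
    rw [tsub_zero] at lim
    exact le_of_tendsto' lim (fun m => (hμ m).le)
  exact (prob_compl_eq_zero_iff hop.measurableSet).mpr h1

end Open
end ShiftTypical

open Filter MeasureTheory Topology Metric Set
open scoped ENNReal NNReal BoundedContinuousFunction

namespace ShiftTypical

section Erg
variable {X : Type*} [TopologicalSpace X] [PolishSpace X] [MeasurableSpace X] [BorelSpace X]

/-- Countable family of test functions approximating indicators. -/
lemma exists_family : ∃ 𝓕 : Set (X →ᵇ ℝ), 𝓕.Countable ∧ (∀ f ∈ 𝓕, ∀ x, 0 ≤ f x ∧ f x ≤ 1) ∧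
    ∀ (μ : ProbabilityMeasure X) (s : Set X), MeasurableSet s → ∀ ε > 0, ∃ f ∈ 𝓕,
      ∫ x, |f x - s.indicator (fun _ => (1 : ℝ)) x| ∂(μ : Measure X) < ε := by
  classical
  have hcl : ∀ F : Finset (TopologicalSpace.countableBasis X), IsClosed (⋃ U ∈ F, (U : Set X))ᶜ := by
    intro F
    rw [isClosed_compl_iff]
    exact isOpen_biUnion fun U _ => TopologicalSpace.isOpen_of_mem_countableBasis U.2
  let G : Finset (TopologicalSpace.countableBasis X) × ℕ → (X →ᵇ ℝ) := fun q =>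
    BoundedContinuousFunction.ofNormedAddCommGroup (fun x => (((hcl q.1).apprSeq q.2 x : ℝ≥0) : ℝ))
      (by fun_prop) 1 (fun x => by
        simpa using HasOuterApproxClosed.apprSeq_apply_le_one (hcl q.1) q.2 x)
  have hG : ∀ q x, G q x = (((hcl q.1).apprSeq q.2 x : ℝ≥0) : ℝ) := fun q x => rfl
  have : Countable (TopologicalSpace.countableBasis X) := (TopologicalSpace.countable_countableBasis X)
  refine ⟨range G, countable_range G, ?_, ?_⟩
  · rintro _ ⟨q, rfl⟩ x
    rw [hG]
    exact ⟨by positivity, by exact_mod_cast HasOuterApproxClosed.apprSeq_apply_le_one (hcl q.1) q.2 x⟩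
  intro μ s hs ε hε
  let m : Measure X := μ
  obtain ⟨U, hsU, hU, -, hUs⟩ := hs.compl.exists_isOpen_sdiff_lt (μ := (μ : Measure X)) (measure_ne_top _ _)
    (ε := ENNReal.ofReal (ε / 3)) (by simpa using hε)
  -- inner approximation of `U` by a finite union
  obtain ⟨F, hFU, hF⟩ : ∃ F : Finset (TopologicalSpace.countableBasis X), (⋃ V ∈ F, (V : Set X)) ⊆ U ∧
      (μ : Measure X) (U \ ⋃ V ∈ F, (V : Set X)) < ENNReal.ofReal (ε / 3) := by
    by_cases hU0 : (μ : Measure X) U = 0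
    · refine ⟨∅, by simp, ?_⟩
      simpa [hU0] using hε
    let r : ℝ≥0 := μ U - (ε / 3).toNNReal
    have hU0' : 0 < μ U := by
      rw [pos_iff_ne_zero]
      simpa [ProbabilityMeasure.null_iff_toMeasure_null] using hU0
    have hr : r < μ U := tsub_lt_self hU0' (by simpa using hε)
    obtain ⟨T, hT, hrT, hTU⟩ := ProbabilityMeasure.exists_lt_measure_biUnion_of_isOpen
      (S := TopologicalSpace.countableBasis X) μ (fun u hu x hx => by
        obtain ⟨v, hv, hxv, hvu⟩ := (TopologicalSpace.isBasis_countableBasis X).exists_subset_of_mem_open hx hu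
        exact ⟨v, hv, (TopologicalSpace.isOpen_of_mem_countableBasis hv).mem_nhds hxv, hvu⟩) hU hr
    have hE : (⋃ V ∈ T.subtype (· ∈ TopologicalSpace.countableBasis X), (V : Set X)) = ⋃ t ∈ T, t := by
      ext x
      simp only [Finset.mem_subtype, mem_iUnion, exists_prop, Subtype.exists]
      constructor
      · rintro ⟨a, ha, h, hx⟩; exact ⟨a, h, hx⟩
      · rintro ⟨a, h, hx⟩; exact ⟨a, hT a h, h, hx⟩
    refine ⟨T.subtype _, ?_, ?_⟩
    · rw [hE]; exact hTU
    · rw [hE, measure_sdiff hTU (Finset.measurableSet_biUnion _ fun t ht =>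
        (TopologicalSpace.isOpen_of_mem_countableBasis (hT t ht)).measurableSet).nullMeasurableSet (measure_ne_top _ _)]
      rw [← ProbabilityMeasure.ennreal_coeFn_eq_coeFn_toMeasure, ← ProbabilityMeasure.ennreal_coeFn_eq_coeFn_toMeasure,
        ENNReal.ofReal, ← ENNReal.coe_sub, ENNReal.coe_lt_coe]
      have h2 : μ U < μ (⋃ t ∈ T, t) + (ε / 3).toNNReal := by
        have := (tsub_lt_iff_right (a := μ U) (b := (ε/3).toNNReal) (c := μ (⋃ t ∈ T, t)))
        by_cases hle : (ε/3).toNNReal ≤ μ U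
        · exact (this hle).mp hrT
        · exact lt_of_lt_of_le (not_le.mp hle) le_add_self
      by_contra hcon
      have h3 := not_lt.mp hcon
      have h4 : μ (⋃ t ∈ T, t) ≤ μ U := μ.apply_mono hTU
      have h5 := add_le_add_right h3 (μ (⋃ t ∈ T, t))
      rw [add_tsub_cancel_of_le h4] at h5
      exact absurd h2 (not_lt.mpr h5)
  set V := ⋃ V ∈ F, (V : Set X) with hV
  have hVo : IsOpen V := by
    have := hcl F
    rwa [isClosed_compl_iff] at this
  have hlim : Tendsto (fun k => ∫ x, |G (F, k) x - (Vᶜ).indicator (fun _ => (1 : ℝ)) x| ∂(μ : Measure X)) atTop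
      (𝓝 (∫ x, (0 : ℝ) ∂(μ : Measure X))) := by
    refine tendsto_integral_of_dominated_convergence (fun _ => 1) ?_ (integrable_const _) ?_ ?_
    · intro k
      refine (Measurable.abs ?_).aestronglyMeasurable
      exact (G (F, k)).continuous.measurable.sub (measurable_const.indicator hVo.measurableSet.compl)
    · intro k
      refine ae_of_all _ fun x => ?_
      have h1 : G (F, k) x ≤ 1 := by
        rw [hG]
        exact_mod_cast HasOuterApproxClosed.apprSeq_apply_le_one (hcl F) k x
      have h0 : 0 ≤ G (F, k) x := by rw [hG]; positivity
      rw [Real.norm_eq_abs, abs_abs]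
      by_cases hx : x ∈ Vᶜ
      · rw [indicator_of_mem hx, abs_le]; constructor <;> linarith
      · rw [indicator_of_notMem hx, abs_le]; constructor <;> linarith
    · refine ae_of_all _ fun x => ?_
      have := (tendsto_pi_nhds.mp (HasOuterApproxClosed.tendsto_apprSeq (hcl F))) x
      have h2 := (NNReal.tendsto_coe.mpr this)
      have h3 : Tendsto (fun k => |G (F, k) x - (Vᶜ).indicator (fun _ => (1 : ℝ)) x|) atTop
          (𝓝 |(((Vᶜ).indicator (fun _ => (1 : ℝ≥0)) x : ℝ≥0) : ℝ) - (Vᶜ).indicator (fun _ => (1 : ℝ)) x|) :=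
        (h2.sub (tendsto_const_nhds (x := (Vᶜ).indicator (fun _ => (1 : ℝ)) x))).abs
      have e : (((Vᶜ).indicator (fun _ => (1 : ℝ≥0)) x : ℝ≥0) : ℝ) = (Vᶜ).indicator (fun _ => (1 : ℝ)) x := by
        by_cases hx : x ∈ Vᶜ
        · simp [indicator_of_mem hx]
        · simp [indicator_of_notMem hx]
      rw [e, sub_self, abs_zero] at h3
      exact h3
  rw [integral_zero] at hlim
  obtain ⟨k, hk⟩ := ((tendsto_order.mp hlim).2 (ε / 3) (by linarith)).exists
  refine ⟨G (F, k), ⟨_, rfl⟩, ?_⟩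
  have hm1 : MeasurableSet (U \ sᶜ) := MeasurableSet.diff hU.measurableSet hs.compl
  have hm2 : MeasurableSet (U \ V) := MeasurableSet.diff hU.measurableSet hVo.measurableSet
  have hG01 : ∀ x, 0 ≤ G (F, k) x ∧ G (F, k) x ≤ 1 := fun x => by
    rw [hG]
    exact ⟨by positivity, by exact_mod_cast HasOuterApproxClosed.apprSeq_apply_le_one (hcl F) k x⟩
  have hi0 : Integrable (fun x => |G (F, k) x - (Vᶜ).indicator (fun _ => (1 : ℝ)) x|) (μ : Measure X) :=
    (((G (F, k)).integrable _).sub ((integrable_const (1 : ℝ)).indicator hVo.measurableSet.compl)).abs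
  have hi1 : Integrable ((U \ sᶜ).indicator (fun _ => (1 : ℝ))) (μ : Measure X) :=
    (integrable_const (1 : ℝ)).indicator hm1
  have hi2 : Integrable ((U \ V).indicator (fun _ => (1 : ℝ))) (μ : Measure X) :=
    (integrable_const (1 : ℝ)).indicator hm2
  have hreal : ∀ A : Set X, (μ : Measure X) A < ENNReal.ofReal (ε / 3) → (μ : Measure X).real A < ε / 3 :=
    fun A hA => (ENNReal.lt_ofReal_iff_toReal_lt (measure_ne_top _ _)).mp hA
  calc ∫ x, |G (F, k) x - s.indicator (fun _ => (1 : ℝ)) x| ∂(μ : Measure X)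
      ≤ ∫ x, (|G (F, k) x - (Vᶜ).indicator (fun _ => (1 : ℝ)) x| + (U \ sᶜ).indicator (fun _ => (1 : ℝ)) x
          + (U \ V).indicator (fun _ => (1 : ℝ)) x) ∂(μ : Measure X) := by
        refine integral_mono (((G (F, k)).integrable _).sub ((integrable_const (1 : ℝ)).indicator hs)).abs
          ((hi0.add hi1).add hi2) fun x => ?_
        have hx0 := hG01 x
        by_cases h1 : x ∈ s <;> by_cases h2 : x ∈ V
        · have h3 : x ∈ U := hFU h2
          simp [h1, h2, h3]
          linarith [abs_sub_abs_le_abs_sub (G (F, k) x - 1) (G (F, k) x), abs_sub_le (G (F,k) x) 0 1, abs_of_nonneg hx0.1, abs_of_nonpos (sub_nonpos.mpr hx0.2)]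
        · have e1 : 0 ≤ (U \ sᶜ).indicator (fun _ => (1 : ℝ)) x := indicator_nonneg (by simp) x
          have e2 : 0 ≤ (U \ V).indicator (fun _ => (1 : ℝ)) x := indicator_nonneg (by simp) x
          have e3 : x ∈ Vᶜ := h2
          rw [indicator_of_mem h1, indicator_of_mem e3]
          linarith
        · have h3 : x ∈ U := hFU h2
          simp [h1, h2]
        · have h3 : x ∈ U := hsU h1
          simp [h1, h2, h3]
          linarith [abs_of_nonneg hx0.1, abs_nonneg (G (F, k) x - 1)]
    _ = ∫ x, |G (F, k) x - (Vᶜ).indicator (fun _ => (1 : ℝ)) x| ∂(μ : Measure X)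
          + (μ : Measure X).real (U \ sᶜ) + (μ : Measure X).real (U \ V) := by
        have e1 := integral_add (hi0.add hi1) hi2
        have e2 := integral_add hi0 hi1
        have e3 : ∫ x, (U \ sᶜ).indicator (fun _ => (1 : ℝ)) x ∂(μ : Measure X) = _ := integral_indicator_one hm1
        have e4 : ∫ x, (U \ V).indicator (fun _ => (1 : ℝ)) x ∂(μ : Measure X) = _ := integral_indicator_one hm2
        rw [← e3, ← e4, ← e2]
        exact e1
    _ < ε := by linarith [hreal _ hUs, hreal _ hF]

end Erg
end ShiftTypical

open Filter MeasureTheory Topology Metric Set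
open scoped ENNReal NNReal BoundedContinuousFunction

namespace ShiftTypical

section Erg2
variable {X : Type*} [TopologicalSpace X]

/-- Birkhoff averages as bounded continuous functions -/
noncomputable def avg (T : X → X) (hT : Continuous T) (n : ℕ) (f : X →ᵇ ℝ) : X →ᵇ ℝ :=
  (n : ℝ)⁻¹ • ∑ i ∈ Finset.range n, f.compContinuous ⟨T^[i], hT.iterate i⟩

lemma avg_apply (T : X → X) (hT : Continuous T) (n : ℕ) (f : X →ᵇ ℝ) (x : X) :
    avg T hT n f x = (n : ℝ)⁻¹ * ∑ i ∈ Finset.range n, f (T^[i] x) := by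
  simp [avg]

variable [MeasurableSpace X] [BorelSpace X]

lemma ergodic_of {T : X → X} (hT : Continuous T) {𝓕 : Set (X →ᵇ ℝ)}
    (h01 : ∀ f ∈ 𝓕, ∀ x, 0 ≤ f x ∧ f x ≤ 1)
    {μ : Measure X} [IsProbabilityMeasure μ] (hp : MeasurePreserving T μ μ)
    (happ : ∀ s : Set X, MeasurableSet s → ∀ ε > 0, ∃ f ∈ 𝓕,
      ∫ x, |f x - s.indicator (fun _ => (1 : ℝ)) x| ∂μ < ε)
    (h : ∀ f ∈ 𝓕, ∀ ε > 0, ∃ n : ℕ, 1 ≤ n ∧ ∫ x, (avg T hT n f * avg T hT n f) x ∂μ - (∫ x, f x ∂μ) ^ 2 < ε) :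
    Ergodic T μ := by
  refine { hp with aeconst_set := ?_ }
  intro s hs hinv
  set a := μ.real s with ha
  set g : X → ℝ := s.indicator (fun _ => (1 : ℝ)) with hg
  have hgi : Integrable g μ := (integrable_const (1 : ℝ)).indicator hs
  have hga : ∫ x, g x ∂μ = a := integral_indicator_one hs
  have hgT : ∀ i x, g (T^[i] x) = g x := by
    intro i
    induction i with
    | zero => intro x; rfl
    | succ i ih =>
      intro x
      rw [Function.iterate_succ_apply, ih]
      have : T x ∈ s ↔ x ∈ s := by
        conv_rhs => rw [← hinv]
        rfl
      by_cases hx : x ∈ s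
      · rw [hg, indicator_of_mem hx, indicator_of_mem (this.mpr hx)]
      · rw [hg, indicator_of_notMem hx, indicator_of_notMem (fun h => hx (this.mp h))]
  have hg01 : ∀ x, 0 ≤ g x ∧ g x ≤ 1 ∧ g x * g x = g x := by
    intro x
    by_cases hx : x ∈ s
    · simp [hg, indicator_of_mem hx]
    · simp [hg, indicator_of_notMem hx]
  have key : ∀ ε > 0, a - a ^ 2 ≤ 5 * ε := by
    intro ε hε
    obtain ⟨f, hf, hfe⟩ := happ s hs ε hε
    obtain ⟨n, hn, hv⟩ := h f hf ε hε
    have hn0 : (0 : ℝ) < n := by exact_mod_cast hn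
    set A := avg T hT n f with hA
    have hintg : ∀ i, ∫ x, f (T^[i] x) ∂μ = ∫ x, f x ∂μ := by
      intro i
      have hmp := hp.iterate i
      have := integral_map (μ := μ) (φ := T^[i]) (f := f) hmp.measurable.aemeasurable
        f.continuous.aestronglyMeasurable
      rw [hmp.map_eq] at this
      exact this.symm
    have hfi : ∀ i, Integrable (fun x => f (T^[i] x)) μ := fun i =>
      (f.compContinuous ⟨T^[i], hT.iterate i⟩).integrable μ
    have hAint : ∫ x, A x ∂μ = ∫ x, f x ∂μ := by
      simp only [hA, avg_apply]
      rw [integral_const_mul, integral_finsetSum _ (fun i _ => hfi i)]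
      simp only [hintg, Finset.sum_const, Finset.card_range, nsmul_eq_mul]
      field_simp
    have hA01 : ∀ x, 0 ≤ A x ∧ A x ≤ 1 := by
      intro x
      rw [hA, avg_apply]
      constructor
      · exact mul_nonneg (by positivity) (Finset.sum_nonneg fun i _ => (h01 f hf _).1)
      · rw [inv_mul_le_iff₀ hn0, mul_one]
        calc _ ≤ ∑ i ∈ Finset.range n, (1 : ℝ) := Finset.sum_le_sum fun i _ => (h01 f hf _).2
          _ = n := by simp
    have hdi : ∀ i, Integrable (fun x => |f (T^[i] x) - g x|) μ := fun i => ((hfi i).sub hgi).abs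
    have hAg : ∫ x, |A x - g x| ∂μ ≤ ε := by
      calc ∫ x, |A x - g x| ∂μ ≤ ∫ x, (n : ℝ)⁻¹ * ∑ i ∈ Finset.range n, |f (T^[i] x) - g x| ∂μ := by
            refine integral_mono ((A.integrable μ).sub hgi).abs
              ((integrable_finsetSum _ fun i _ => hdi i).const_mul _) fun x => ?_
            have e : A x - g x = (n : ℝ)⁻¹ * ∑ i ∈ Finset.range n, (f (T^[i] x) - g x) := by
              rw [hA, avg_apply, Finset.sum_sub_distrib]
              simp only [Finset.sum_const, Finset.card_range, nsmul_eq_mul]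
              field_simp
            simp only [e, abs_mul, abs_of_pos (inv_pos.mpr hn0)]
            exact mul_le_mul_of_nonneg_left (Finset.abs_sum_le_sum_abs _ _) (by positivity)
        _ = (n : ℝ)⁻¹ * ∑ i ∈ Finset.range n, ∫ x, |f (T^[i] x) - g x| ∂μ := by
            rw [integral_const_mul, integral_finsetSum _ fun i _ => hdi i]
        _ = (n : ℝ)⁻¹ * ∑ i ∈ Finset.range n, ∫ x, |f x - g x| ∂μ := by
            congr 1
            refine Finset.sum_congr rfl fun i _ => ?_
            have hmp := hp.iterate i
            have hm : AEStronglyMeasurable (fun x => |f x - g x|) (μ.map (T^[i])) := by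
              rw [hmp.map_eq]
              exact (((f.integrable μ).sub hgi).abs).aestronglyMeasurable
            have := integral_map (μ := μ) (φ := T^[i]) hmp.measurable.aemeasurable hm
            rw [hmp.map_eq] at this
            rw [this]
            simp only [hgT]
        _ = ∫ x, |f x - g x| ∂μ := by
            simp only [Finset.sum_const, Finset.card_range, nsmul_eq_mul]
            field_simp
        _ ≤ ε := hfe.le
    have hi3 : Integrable (fun x => (A * A) x + 2 * |A x - g x|) μ :=
      ((A * A).integrable μ).add ((((A.integrable μ).sub hgi).abs).const_mul 2)
    have e1 : a ≤ ∫ x, (A * A) x ∂μ + 2 * ε := by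
      calc a = ∫ x, g x ∂μ := hga.symm
        _ ≤ ∫ x, ((A * A) x + 2 * |A x - g x|) ∂μ := by
            refine integral_mono hgi hi3 fun x => ?_
            simp only [BoundedContinuousFunction.coe_mul, Pi.mul_apply]
            obtain ⟨b1, b2, b3⟩ := hg01 x
            obtain ⟨c1, c2⟩ := hA01 x
            have d1 := neg_abs_le (A x - g x)
            have d2 := abs_nonneg (A x - g x)
            nlinarith
        _ = ∫ x, (A * A) x ∂μ + 2 * ∫ x, |A x - g x| ∂μ := by
            rw [← integral_const_mul]
            exact integral_add ((A * A).integrable μ) ((((A.integrable μ).sub hgi).abs).const_mul 2)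
        _ ≤ _ := by linarith
    have e2 : |∫ x, A x ∂μ - a| ≤ ε := by
      rw [← hga, ← integral_sub (A.integrable μ) hgi]
      exact (abs_integral_le_integral_abs).trans hAg
    have e3 : 0 ≤ ∫ x, A x ∂μ := integral_nonneg fun x => (hA01 x).1
    have e4 : ∫ x, A x ∂μ ≤ 1 := by
      calc _ ≤ ∫ x, (1 : ℝ) ∂μ := integral_mono (A.integrable μ) (integrable_const _) fun x => (hA01 x).2
        _ = 1 := by simp
    have e5 : 0 ≤ a := measureReal_nonneg
    have e6 : a ≤ 1 := measureReal_le_one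
    rw [← hAint] at hv
    have := abs_le.mp e2
    have e7 : (∫ x, A x ∂μ) ^ 2 - a ^ 2 ≤ 2 * ε := by nlinarith
    linarith
  have hz : a - a ^ 2 ≤ 0 := by
    refine le_of_forall_pos_le_add fun ε hε => ?_
    have := key (ε / 5) (by linarith)
    linarith
  have h0 : 0 ≤ a := measureReal_nonneg
  have h1 : a ≤ 1 := measureReal_le_one
  have h2 : a = 0 ∨ a = 1 := by
    have : a * (1 - a) = 0 := le_antisymm (by linarith) (mul_nonneg h0 (by linarith))
    rcases mul_eq_zero.mp this with h | h
    · exact Or.inl h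
    · exact Or.inr (by linarith)
  rw [eventuallyConst_set']
  rcases h2 with h | h
  · left
    rw [ha, measureReal_eq_zero_iff] at h
    exact (ae_eq_empty).mpr h
  · right
    rw [ae_eq_univ, prob_compl_eq_zero_iff hs]
    rw [ha, measureReal_def] at h
    exact (ENNReal.toReal_eq_one_iff _).mp h

end Erg2

section Erg3
variable {M : Type*} [MetricSpace M] [CompleteSpace M] [TopologicalSpace.SeparableSpace M]
  [MeasurableSpace M] [BorelSpace M]

def ergSet (f : (ℤ → M) →ᵇ ℝ) (e : ℝ) : Set (MT M) :=
  {μ | ∃ n : ℕ, 1 ≤ n ∧ ∫ x, (avg fullShift continuous_fullShift n f * avg fullShift continuous_fullShift n f) x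
    ∂(μ.1 : Measure (ℤ → M)) - (∫ x, f x ∂(μ.1 : Measure (ℤ → M))) ^ 2 < e}

lemma isOpen_ergSet (f : (ℤ → M) →ᵇ ℝ) (e : ℝ) : IsOpen (ergSet f e) := by
  have : ergSet f e = ⋃ (n : ℕ) (_ : 1 ≤ n), {μ : MT M |
    ∫ x, (avg fullShift continuous_fullShift n f * avg fullShift continuous_fullShift n f) x
      ∂(μ.1 : Measure (ℤ → M)) - (∫ x, f x ∂(μ.1 : Measure (ℤ → M))) ^ 2 < e} := by
    ext q; simp only [ergSet, mem_iUnion, mem_ofPred_eq, exists_prop]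
  rw [this]
  refine isOpen_iUnion fun n => isOpen_iUnion fun _ => ?_
  have hc : ∀ g : (ℤ → M) →ᵇ ℝ, Continuous fun μ : MT M => ∫ x, g x ∂(μ.1 : Measure (ℤ → M)) := fun g =>
    (ProbabilityMeasure.continuous_integral_boundedContinuousFunction g).comp continuous_subtype_val
  exact isOpen_lt ((hc _).sub ((hc f).pow 2)) continuous_const

lemma ergodic_residual (hd : ∀ (f : (ℤ → M) →ᵇ ℝ) (e : ℝ), 0 < e → Dense (ergSet f e)) :
    ∀ᶠ μ in residual (MT M), Ergodic fullShift (μ.1 : Measure (ℤ → M)) := by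
  obtain ⟨𝓕, hcount, h01, happ⟩ := exists_family (X := ℤ → M)
  have h : ∀ f ∈ 𝓕, ∀ᶠ μ in residual (MT M), ∀ m : ℕ, μ ∈ ergSet f (1 / ((m : ℝ) + 1)) := by
    intro f _
    rw [eventually_countable_forall]
    intro m
    exact residual_of_dense_open (isOpen_ergSet f _) (hd f _ (by positivity))
  have h2 := (eventually_countable_ball hcount).mpr h
  filter_upwards [h2] with μ hμ
  refine ergodic_of continuous_fullShift h01 ⟨continuous_fullShift.measurable, μ.2⟩
    (fun s hs ε hε => happ μ.1 s hs ε hε) ?_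
  intro f hf ε hε
  obtain ⟨m, hm⟩ := exists_nat_one_div_lt hε
  obtain ⟨n, hn, hlt⟩ := hμ f hf m
  exact ⟨n, hn, hlt.trans hm⟩

end Erg3
end ShiftTypical

open Filter MeasureTheory Topology Metric Set
open scoped ENNReal NNReal BoundedContinuousFunction

namespace ShiftTypical

section AvgM
variable {X : Type*} [MeasurableSpace X]

/-- the average of the first `P` measures -/
noncomputable def avgM (P : ℕ) (κ : ℕ → Measure X) : Measure X :=
  (P : ℝ≥0∞)⁻¹ • ∑ t ∈ Finset.range P, κ t

lemma avgM_apply (P : ℕ) (κ : ℕ → Measure X) (S : Set X) :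
    avgM P κ S = (P : ℝ≥0∞)⁻¹ * ∑ t ∈ Finset.range P, κ t S := by
  simp [avgM]

lemma const_avg {P : ℕ} (hP : 1 ≤ P) (c : ℝ≥0∞) : (P : ℝ≥0∞)⁻¹ * ∑ _t ∈ Finset.range P, c = c := by
  have : (P : ℝ≥0∞) ≠ 0 := by
    have : P ≠ 0 := by omega
    exact_mod_cast this
  simp only [Finset.sum_const, Finset.card_range, nsmul_eq_mul]
  rw [← mul_assoc, ENNReal.inv_mul_cancel this (by simp), one_mul]

lemma avgM_le {P : ℕ} (hP : 1 ≤ P) (κ : ℕ → Measure X) (S : Set X) {c : ℝ≥0∞} (h : ∀ t, κ t S ≤ c) :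
    avgM P κ S ≤ c := by
  rw [avgM_apply]
  calc _ ≤ (P : ℝ≥0∞)⁻¹ * ∑ _t ∈ Finset.range P, c := by gcongr; exact h _
    _ = c := const_avg hP c

lemma le_avgM {P : ℕ} (hP : 1 ≤ P) (κ : ℕ → Measure X) (S : Set X) {c : ℝ≥0∞} (h : ∀ t, c ≤ κ t S) :
    c ≤ avgM P κ S := by
  rw [avgM_apply]
  calc c = (P : ℝ≥0∞)⁻¹ * ∑ _t ∈ Finset.range P, c := (const_avg hP c).symm
    _ ≤ _ := by gcongr; exact h _

lemma avgM_prob {P : ℕ} (hP : 1 ≤ P) (κ : ℕ → Measure X) [∀ t, IsProbabilityMeasure (κ t)] :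
    IsProbabilityMeasure (avgM P κ) :=
  ⟨le_antisymm (avgM_le hP κ _ fun t => by simp) (le_avgM hP κ _ fun t => by simp)⟩

lemma avgM_map {P : ℕ} (κ : ℕ → Measure X) [∀ t, IsProbabilityMeasure (κ t)] {T : X → X} (hT : Measurable T)
    (h : ∀ t, (κ t).map T = κ (t + 1)) (hper : κ P = κ 0) : (avgM P κ).map T = avgM P κ := by
  ext S hS
  rw [Measure.map_apply hT hS, avgM_apply, avgM_apply]
  congr 1
  have : ∀ t, κ t (T ⁻¹' S) = κ (t + 1) S := fun t => by rw [← h t, Measure.map_apply hT hS]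
  simp only [this]
  have h1 := Finset.sum_range_succ (fun t => κ t S) P
  have h2 := Finset.sum_range_succ' (fun t => κ t S) P
  rw [h1, hper] at h2
  exact ((ENNReal.add_left_inj (measure_ne_top (κ 0) S)).mp h2).symm

lemma avgM_integral [TopologicalSpace X] [OpensMeasurableSpace X] {P : ℕ} (κ : ℕ → Measure X)
    [∀ t, IsProbabilityMeasure (κ t)] (f : X →ᵇ ℝ) :
    ∫ x, f x ∂(avgM P κ) = (P : ℝ)⁻¹ * ∑ t ∈ Finset.range P, ∫ x, f x ∂(κ t) := by
  unfold avgM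
  rw [integral_smul_measure, integral_finsetSum_measure (fun t _ => f.integrable _)]
  simp

end AvgM

section Per
variable {M : Type*} [MetricSpace M] [CompleteSpace M] [TopologicalSpace.SeparableSpace M]
  [MeasurableSpace M] [BorelSpace M]

/-- The average of a periodic sequence of measures, as an invariant measure -/
noncomputable def mkMT {P : ℕ} (hP : 1 ≤ P) (κ : ℕ → Measure (ℤ → M)) [∀ t, IsProbabilityMeasure (κ t)]
    (h : ∀ t, (κ t).map fullShift = κ (t + 1)) (hper : κ P = κ 0) : MT M :=
  ⟨⟨avgM P κ, avgM_prob hP κ⟩, avgM_map κ continuous_fullShift.measurable h hper⟩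

/-- orbit measure of a periodic point -/
noncomputable def orb {P : ℕ} (hP : 1 ≤ P) (p : ℤ → M) (hp : fullShift^[P] p = p) : MT M :=
  mkMT hP (fun t => Measure.dirac (fullShift^[t] p))
    (fun t => by
      rw [Measure.map_dirac' continuous_fullShift.measurable, Function.iterate_succ_apply'])
    (by simp only [hp]; rfl)

/-- the set of periodic orbit measures -/
def perSet (M : Type*) [MetricSpace M] [CompleteSpace M] [TopologicalSpace.SeparableSpace M]
  [MeasurableSpace M] [BorelSpace M] : Set (MT M) :=
  {μ | ∃ (P : ℕ) (hP : 1 ≤ P) (p : ℤ → M) (hp : fullShift^[P] p = p), μ = orb hP p hp}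

lemma orb_one {P : ℕ} (hP : 1 ≤ P) (p : ℤ → M) (hp : fullShift^[P] p = p) {S : Set (ℤ → M)}
    (h : ∀ t, fullShift^[t] p ∈ S) : ((orb hP p hp).1 : Measure (ℤ → M)) S = 1 :=
  le_antisymm prob_le_one (le_avgM hP _ S fun t => by
    rw [Measure.dirac_apply_of_mem (h t)])

lemma orb_point {P : ℕ} (hP : 1 ≤ P) (p : ℤ → M) (hp : fullShift^[P] p = p) {S : Set (ℤ → M)}
    {t : ℕ} (h : fullShift^[t] p ∈ S) : (P : ℝ≥0∞)⁻¹ ≤ ((orb hP p hp).1 : Measure (ℤ → M)) S := by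
  change _ ≤ avgM P _ S
  rw [avgM_apply]
  have h2 : fullShift^[t % P] p ∈ S := by
    have : fullShift^[t % P] p = fullShift^[t] p := (show Function.IsPeriodicPt fullShift P p from hp).iterate_mod_apply t
    rwa [this]
  calc (P : ℝ≥0∞)⁻¹ = (P : ℝ≥0∞)⁻¹ * (Measure.dirac (fullShift^[t % P] p) S) := by
        rw [Measure.dirac_apply_of_mem h2, mul_one]
    _ ≤ _ := by
        gcongr
        exact Finset.single_le_sum (f := fun t => Measure.dirac (fullShift^[t] p) S) (fun _ _ => zero_le)
          (Finset.mem_range.mpr (Nat.mod_lt _ hP))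

lemma orb_integral {P : ℕ} (hP : 1 ≤ P) (p : ℤ → M) (hp : fullShift^[P] p = p) (f : (ℤ → M) →ᵇ ℝ) :
    ∫ x, f x ∂((orb hP p hp).1 : Measure (ℤ → M)) = (P : ℝ)⁻¹ * ∑ t ∈ Finset.range P, f (fullShift^[t] p) := by
  refine (avgM_integral _ f).trans ?_
  simp

lemma orb_ergSet {P : ℕ} (hP : 1 ≤ P) (p : ℤ → M) (hp : fullShift^[P] p = p) (f : (ℤ → M) →ᵇ ℝ) {e : ℝ}
    (he : 0 < e) : orb hP p hp ∈ ergSet f e := by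
  refine ⟨P, hP, ?_⟩
  have hconst : ∀ t, avg fullShift continuous_fullShift P f (fullShift^[t] p) =
      (P : ℝ)⁻¹ * ∑ t ∈ Finset.range P, f (fullShift^[t] p) := by
    intro t
    rw [avg_apply]
    congr 1
    induction t with
    | zero => rfl
    | succ t ih =>
      rw [← ih]
      have h1 := Finset.sum_range_succ (fun i => f (fullShift^[i] (fullShift^[t] p))) P
      have h2 := Finset.sum_range_succ' (fun i => f (fullShift^[i] (fullShift^[t] p))) P
      have h3 : fullShift^[P] (fullShift^[t] p) = fullShift^[t] p := by
        rw [← Function.iterate_add_apply, add_comm, Function.iterate_add_apply, hp]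
      rw [h1] at h2
      simp only [h3, Function.iterate_zero, id] at h2
      have h4 := add_right_cancel h2
      rw [h4]
      refine Finset.sum_congr rfl fun i _ => ?_
      rw [Function.iterate_succ_apply' _ t, Function.iterate_succ_apply]
  have hP0 : (P : ℝ) ≠ 0 := by
    have : P ≠ 0 := by omega
    exact_mod_cast this
  rw [orb_integral, orb_integral]
  simp only [BoundedContinuousFunction.coe_mul, Pi.mul_apply, hconst, Finset.sum_const, Finset.card_range, nsmul_eq_mul]
  rw [inv_mul_cancel_left₀ hP0, pow_two, sub_self]
  exact he

lemma exists_small (k P : ℕ) : ∃ r : ℝ, 0 < r ∧ r < 1 / ((k : ℝ) + 1) ∧ (P : ℝ) < r ^ (-(1 / ((k : ℝ) + 1))) := by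
  have hk : 0 < 1 / ((k : ℝ) + 1) := by positivity
  have h1 : Tendsto (fun r : ℝ => r ^ (-(1 / ((k : ℝ) + 1)))) (𝓝[>] 0) atTop :=
    tendsto_rpow_neg_nhdsGT_zero (by linarith)
  have h2 := h1.eventually_gt_atTop (P : ℝ)
  have h3 : ∀ᶠ r : ℝ in 𝓝[>] 0, r ∈ Ioo 0 (1 / ((k : ℝ) + 1)) := Ioo_mem_nhdsGT hk
  obtain ⟨r, hr2, hr3⟩ := (h2.and h3).exists
  exact ⟨r, hr3.1, hr3.2, hr2⟩

lemma orb_lowRec {P : ℕ} (hP : 1 ≤ P) (p : ℤ → M) (hp : fullShift^[P] p = p) (k : ℕ) {c : ℝ≥0∞}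
    (hc : c < 1) : orb hP p hp ∈ good (lowRec M k) c := by
  obtain ⟨r, h0, h1, h2⟩ := exists_small k P
  refine lt_of_lt_of_eq hc (orb_one hP p hp fun t => ?_).symm
  refine ⟨r, h0, h1, P, hP, h2.le, ?_⟩
  have h3 : fullShift^[P] (fullShift^[t] p) = fullShift^[t] p := by
    rw [← Function.iterate_add_apply, add_comm, Function.iterate_add_apply, hp]
  simp only [h3, shiftDist_self]
  exact h0

lemma orb_lowDim {P : ℕ} (hP : 1 ≤ P) (p : ℤ → M) (hp : fullShift^[P] p = p) (k : ℕ) {c : ℝ≥0∞}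
    (hc : c < 1) : orb hP p hp ∈ good (lowDim M k) c := by
  obtain ⟨r, h0, h1, h2⟩ := exists_small k P
  refine lt_of_lt_of_eq hc (orb_one hP p hp fun t => ?_).symm
  refine ⟨r, h0, h1, lt_of_lt_of_le ?_ (orb_point hP p hp (t := t) ?_)⟩
  · have hP0 : (0 : ℝ) < P := by exact_mod_cast hP
    rw [Real.rpow_neg h0.le] at h2
    have h4 : r ^ (1 / ((k : ℝ) + 1)) < (P : ℝ)⁻¹ := by
      rw [lt_inv_comm₀ (by positivity) hP0]; exact h2
    have : (P : ℝ≥0∞)⁻¹ = ENNReal.ofReal ((P : ℝ)⁻¹) := by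
      rw [ENNReal.ofReal_inv_of_pos hP0, ENNReal.ofReal_natCast]
    rw [this]
    exact (ENNReal.ofReal_lt_ofReal_iff (by positivity)).mpr h4
  · simp only [mem_ofPred_eq, shiftDist_self]; exact h0

end Per
end ShiftTypical

open Filter MeasureTheory Topology Metric Set
open scoped ENNReal NNReal BoundedContinuousFunction

namespace ShiftTypical

section Crit
variable {M : Type*} [MetricSpace M] [CompleteSpace M] [TopologicalSpace.SeparableSpace M]
  [MeasurableSpace M] [BorelSpace M]

/-- closure criterion with finitely many test functions -/
lemma mem_closure_of {D : Set (MT M)} {μ : MT M}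
    (h : ∀ (F : Finset ((ℤ → M) →ᵇ ℝ)) (ε : ℝ), 0 < ε → ∃ ν ∈ D, ∀ f ∈ F,
      |∫ x, f x ∂(ν.1 : Measure (ℤ → M)) - ∫ x, f x ∂(μ.1 : Measure (ℤ → M))| < ε) :
    μ ∈ closure D := by
  let L : Filter (MT M) := ⨅ f : (ℤ → M) →ᵇ ℝ, comap (fun ν : MT M => ∫ x, f x ∂(ν.1 : Measure (ℤ → M)))
    (𝓝 (∫ x, f x ∂(μ.1 : Measure (ℤ → M))))
  have hL : L ≤ 𝓝 μ := by
    have : Tendsto (fun ν : MT M => ν) L (𝓝 μ) := by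
      rw [tendsto_subtype_rng, ProbabilityMeasure.tendsto_iff_forall_integral_tendsto]
      intro f
      exact tendsto_iff_comap.mpr (iInf_le _ f)
    exact this
  rw [mem_closure_iff_frequently]
  refine Frequently.filter_mono ?_ hL
  rw [frequently_iff]
  intro U hU
  rw [mem_iInf] at hU
  obtain ⟨I, hI, V, hV, rfl⟩ := hU
  have hI' := hI.fintype
  have : ∀ i : I, ∃ ε > 0, ∀ ν : MT M, |∫ x, i.1 x ∂(ν.1 : Measure (ℤ → M)) - ∫ x, i.1 x ∂(μ.1 : Measure (ℤ → M))| < ε → ν ∈ V i := by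
    intro i
    obtain ⟨W, hW, hWV⟩ := mem_comap.mp (hV i)
    obtain ⟨ε, hε, hb⟩ := Metric.mem_nhds_iff.mp hW
    exact ⟨ε, hε, fun ν hν => hWV (hb (by simpa [Real.dist_eq] using hν))⟩
  choose e he0 he using this
  obtain ⟨ε, hε, hεle⟩ : ∃ ε > 0, ∀ i, ε ≤ e i := by
    have h2 : ∀ᶠ ε : ℝ in 𝓝[>] 0, ∀ i, ε ≤ e i := eventually_all.mpr fun i => by
      filter_upwards [Ioo_mem_nhdsGT (he0 i)] with ε hε using hε.2.le
    obtain ⟨ε, h3, h4⟩ := (h2.and self_mem_nhdsWithin).exists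
    exact ⟨ε, h4, h3⟩
  obtain ⟨ν, hν, hf⟩ := h hI.toFinset ε hε
  refine ⟨ν, mem_iInter.mpr fun i => he i ν ((hf i.1 (by simp)).trans_le (hεle i)), hν⟩

end Crit

section Sample

lemma exists_sample {Y ι : Type*} [MeasurableSpace Y] [Countable ι] (μ : Measure Y) [IsProbabilityMeasure μ]
    (g : ι → Y → ℝ) (hg : ∀ i, Measurable (g i)) (hi : ∀ i, Integrable (g i) μ) :
    ∃ y : ℕ → Y, ∀ i, Tendsto (fun n : ℕ => (n : ℝ)⁻¹ * ∑ j ∈ Finset.range n, g i (y j)) atTop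
      (𝓝 (∫ x, g i x ∂μ)) := by
  let ν := Measure.infinitePi (fun _ : ℕ => μ)
  have hmp : ∀ n, MeasurePreserving (fun w : ℕ → Y => w n) ν μ := fun n =>
    measurePreserving_eval_infinitePi (fun _ : ℕ => μ) n
  have key : ∀ᵐ w ∂ν, ∀ i, Tendsto (fun n : ℕ => (n : ℝ)⁻¹ * ∑ j ∈ Finset.range n, g i (w j)) atTop
      (𝓝 (∫ x, g i x ∂μ)) := by
    rw [ae_all_iff]
    intro i
    have hind : ProbabilityTheory.iIndepFun (fun (n : ℕ) (w : ℕ → Y) => g i (w n)) ν :=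
      ProbabilityTheory.iIndepFun_infinitePi (P := fun _ : ℕ => μ) (X := fun _ => g i) (fun _ => hg i)
    have h := ProbabilityTheory.strong_law_ae (μ := ν) (fun (n : ℕ) (w : ℕ → Y) => g i (w n))
      ((hmp 0).integrable_comp_of_integrable (hi i))
      (fun a b hab => hind.indepFun hab)
      (fun n => ⟨((hg i).comp (hmp n).measurable).aemeasurable, ((hg i).comp (hmp 0).measurable).aemeasurable, by
        have e1 : ν.map (fun w => g i (w n)) = μ.map (g i) := by
          rw [← (hmp n).map_eq, Measure.map_map (hg i) (hmp n).measurable]; rfl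
        have e2 : ν.map (fun w => g i (w 0)) = μ.map (g i) := by
          rw [← (hmp 0).map_eq, Measure.map_map (hg i) (hmp 0).measurable]; rfl
        rw [e1, e2]⟩)
    have he : ∫ w, g i (w 0) ∂ν = ∫ x, g i x ∂μ := by
      rw [← (hmp 0).map_eq, integral_map (hmp 0).measurable.aemeasurable (hg i).aestronglyMeasurable]
    rw [he] at h
    filter_upwards [h] with w hw
    simpa using hw
  exact key.exists

end Sample
end ShiftTypical

open Filter MeasureTheory Topology Metric Set
open scoped ENNReal NNReal BoundedContinuousFunction

namespace ShiftTypical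

section Win
variable {M : Type*} [MetricSpace M]

/-- points around which `f` is determined up to `ε` by the window `[-k,k]` -/
def win (f : (ℤ → M) →ᵇ ℝ) (ε : ℝ) (k : ℕ) : Set (ℤ → M) :=
  interior {x | ∀ y : ℤ → M, (∀ j : ℤ, j.natAbs ≤ k → y j = x j) → |f y - f x| < ε}

lemma win_mono (f : (ℤ → M) →ᵇ ℝ) (ε : ℝ) : Monotone (win f ε) := by
  intro a b hab
  refine interior_mono fun x hx y hy => hx y fun j hj => hy j (hj.trans hab)

lemma win_cover (f : (ℤ → M) →ᵇ ℝ) {ε : ℝ} (hε : 0 < ε) (x : ℤ → M) : ∃ k, x ∈ win f ε k := by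
  have h : {y | |f y - f x| < ε / 2} ∈ 𝓝 x := by
    have := (f.continuous.tendsto x) (Metric.ball_mem_nhds (f x) (half_pos hε))
    simpa [Metric.ball, Real.dist_eq] using this
  rw [nhds_pi, Filter.mem_pi] at h
  obtain ⟨I, hI, t, ht, hsub⟩ := h
  refine ⟨hI.toFinset.sup Int.natAbs, ?_⟩
  rw [win, mem_interior_iff_mem_nhds]
  have hmem : I.pi t ∈ 𝓝 x := set_pi_mem_nhds hI (fun i _ => ht i)
  refine mem_of_superset hmem fun z hz y hy => ?_
  have hz' := hsub hz
  have hy' : y ∈ I.pi t := fun i hi => by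
    rw [hy i (Finset.le_sup (f := Int.natAbs) (hI.mem_toFinset.mpr hi))]
    exact hz i hi
  have hy'' := hsub hy'
  simp only [mem_ofPred_eq] at hz' hy''
  have : f y - f z = (f y - f x) - (f z - f x) := by ring
  rw [this]
  calc _ ≤ |f y - f x| + |f z - f x| := abs_sub _ _
    _ < ε := by linarith

variable [CompleteSpace M] [TopologicalSpace.SeparableSpace M] [MeasurableSpace M] [BorelSpace M]

lemma exists_win (μ : Measure (ℤ → M)) [IsProbabilityMeasure μ] (F : Finset ((ℤ → M) →ᵇ ℝ)) {ε : ℝ} (hε : 0 < ε) :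
    ∃ (k : ℕ) (O : Set (ℤ → M)), MeasurableSet O ∧ μ.real O < ε ∧
      ∀ f ∈ F, ∀ x ∉ O, ∀ y : ℤ → M, (∀ j : ℤ, j.natAbs ≤ k → y j = x j) → |f y - f x| < ε := by
  let O : ℕ → Set (ℤ → M) := fun k => ⋂ f ∈ F, win f ε k
  have hO : ∀ k, IsOpen (O k) := fun k => isOpen_biInter_finset fun f _ => isOpen_interior
  have hanti : Antitone fun k => (O k)ᶜ := fun a b hab =>
    compl_subset_compl.mpr (iInter₂_mono fun f _ => win_mono f ε hab)
  have hempty : ⋂ k, (O k)ᶜ = ∅ := by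
    rw [eq_empty_iff_forall_notMem]
    intro x hx
    choose K hK using fun f : (ℤ → M) →ᵇ ℝ => win_cover f hε x
    refine mem_iInter.mp hx (F.sup K) ?_
    exact mem_iInter₂.mpr fun f hf => win_mono f ε (Finset.le_sup hf) (hK f)
  have ht := tendsto_measure_iInter_atTop (μ := μ) (s := fun k => (O k)ᶜ)
    (fun k => (hO k).measurableSet.compl.nullMeasurableSet) hanti ⟨0, measure_ne_top _ _⟩
  rw [hempty, measure_empty] at ht
  obtain ⟨k, hk⟩ := (ht.eventually_lt_const (ENNReal.ofReal_pos.mpr hε)).exists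
  refine ⟨k, (O k)ᶜ, (hO k).measurableSet.compl, ?_, ?_⟩
  · rw [measureReal_def]
    exact (ENNReal.lt_ofReal_iff_toReal_lt (measure_ne_top _ _)).mp hk
  · intro f hf x hx
    rw [notMem_compl_iff] at hx
    exact interior_subset (mem_iInter₂.mp hx f hf)

end Win

section Glue
variable {M : Type*}

/-- Periodic concatenation of the first `K` blocks of length `N` -/
def glue (N K : ℕ) (x : ℕ → ℤ → M) : ℤ → M := fun j =>
  x (((-j) % ((N * K : ℕ) : ℤ)) / N).toNat (-(((-j) % ((N * K : ℕ) : ℤ)) % N))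

lemma glue_per (N K : ℕ) (x : ℕ → ℤ → M) : fullShift^[N * K] (glue N K x) = glue N K x := by
  funext j
  rw [iterate_apply]
  unfold glue
  have : (-(j - ((N * K : ℕ) : ℤ))) % ((N * K : ℕ) : ℤ) = (-j) % ((N * K : ℕ) : ℤ) := by
    rw [neg_sub, sub_eq_add_neg, add_comm, Int.add_emod_right]
  rw [this]

lemma glue_eq {N K : ℕ} (x : ℕ → ℤ → M) {i n k : ℕ} (hi : i < K) (hn : k ≤ n) (hn2 : n + k < N) (j : ℤ)
    (hj : j.natAbs ≤ k) : (fullShift^[i * N + n] (glue N K x)) j = (fullShift^[n] (x i)) j := by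
  rw [iterate_apply, iterate_apply]
  unfold glue
  have hN : (0 : ℤ) < N := by omega
  have h1 : -(j - ((i * N + n : ℕ) : ℤ)) = (n - j) + N * i := by push_cast; ring
  have h0 : 0 ≤ (n : ℤ) - j := by omega
  have h2 : (n : ℤ) - j < N := by omega
  have hle : (N : ℤ) * i + N ≤ N * K := by
    have : (i : ℤ) + 1 ≤ K := by exact_mod_cast hi
    nlinarith
  have hni : 0 ≤ (N : ℤ) * i := by positivity
  have h3 : ((n : ℤ) - j + N * i) % ((N * K : ℕ) : ℤ) = n - j + N * i := by
    apply Int.emod_eq_of_lt <;> push_cast <;> linarith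
  rw [h1, h3, Int.add_mul_ediv_left _ _ hN.ne', Int.add_mul_emod_self_left, Int.ediv_eq_zero_of_lt h0 h2,
    Int.emod_eq_of_lt h0 h2]
  simp

end Glue

section Density
variable {M : Type*} [MetricSpace M] [CompleteSpace M] [TopologicalSpace.SeparableSpace M]
  [MeasurableSpace M] [BorelSpace M]

lemma sum_blocks (g : ℕ → ℝ) (N K : ℕ) : ∑ t ∈ Finset.range (N * K), g t =
    ∑ i ∈ Finset.range K, ∑ n ∈ Finset.range N, g (i * N + n) := by
  induction K with
  | zero => simp
  | succ K ih => rw [Nat.mul_succ, Finset.sum_range_add, ih, Finset.sum_range_succ, mul_comm N K]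

lemma block_bad {N k : ℕ} : ∑ n ∈ Finset.range N, (if k ≤ n ∧ n + k < N then (0 : ℝ) else 1) ≤ 2 * k := by
  have : ∀ n ∈ Finset.range N, (if k ≤ n ∧ n + k < N then (0 : ℝ) else 1) ≤
      (if n ∈ Finset.range k then 1 else 0) + (if n ∈ Finset.Ico (N - k) N then 1 else 0) := by
    intro n hn
    simp only [Finset.mem_range, Finset.mem_Ico] at *
    split_ifs <;> first | omega | norm_num
  refine (Finset.sum_le_sum this).trans ?_
  rw [Finset.sum_add_distrib, Finset.sum_ite_mem, Finset.sum_ite_mem]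
  simp only [Finset.sum_const, nsmul_eq_mul, mul_one]
  have h1 : ((Finset.range N ∩ Finset.range k).card : ℝ) ≤ k := by
    have := Finset.card_le_card (Finset.inter_subset_right (s₁ := Finset.range N) (s₂ := Finset.range k))
    rw [Finset.card_range] at this; exact_mod_cast this
  have h2 : ((Finset.range N ∩ Finset.Ico (N - k) N).card : ℝ) ≤ k := by
    have := Finset.card_le_card (Finset.inter_subset_right (s₁ := Finset.range N) (s₂ := Finset.Ico (N-k) N))
    rw [Nat.card_Ico] at this; exact_mod_cast (by omega)
  linarith

lemma glue_est {f : (ℤ → M) →ᵇ ℝ} {C ε : ℝ} (hC : ∀ x, |f x| ≤ C) (hε : 0 < ε) {O : Set (ℤ → M)} {k : ℕ}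
    (hO : ∀ x ∉ O, ∀ y : ℤ → M, (∀ j : ℤ, j.natAbs ≤ k → y j = x j) → |f y - f x| < ε)
    {N K : ℕ} (hN : 1 ≤ N) (hK : 1 ≤ K) (hkN : 2 * (k : ℝ) ≤ ε * N) (x : ℕ → ℤ → M) :
    |((N * K : ℕ) : ℝ)⁻¹ * ∑ t ∈ Finset.range (N * K), f (fullShift^[t] (glue N K x)) -
      (K : ℝ)⁻¹ * ∑ i ∈ Finset.range K, ((N : ℝ)⁻¹ * ∑ n ∈ Finset.range N, f (fullShift^[n] (x i)))| ≤
    ε + 2 * C * ε + 2 * C * ((K : ℝ)⁻¹ * ∑ i ∈ Finset.range K, ((N : ℝ)⁻¹ * ∑ n ∈ Finset.range N,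
      O.indicator (fun _ => (1 : ℝ)) (fullShift^[n] (x i)))) := by
  have hN0 : (0 : ℝ) < N := by exact_mod_cast hN
  have hK0 : (0 : ℝ) < K := by exact_mod_cast hK
  have hC0 : 0 ≤ C := (abs_nonneg _).trans (hC (x 0))
  rw [sum_blocks]
  simp only [← Finset.mul_sum]
  set S := ∑ i ∈ Finset.range K, ∑ n ∈ Finset.range N, O.indicator (fun _ => (1 : ℝ)) (fullShift^[n] (x i)) with hS
  have key : |∑ i ∈ Finset.range K, ∑ n ∈ Finset.range N, f (fullShift^[i * N + n] (glue N K x)) -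
      ∑ i ∈ Finset.range K, ∑ n ∈ Finset.range N, f (fullShift^[n] (x i))| ≤
      K * (N * ε) + 2 * C * (K * (2 * k)) + 2 * C * S := by
    rw [← Finset.sum_sub_distrib]
    simp only [← Finset.sum_sub_distrib]
    refine (Finset.abs_sum_le_sum_abs _ _).trans ?_
    have h1 : ∀ i ∈ Finset.range K, |∑ n ∈ Finset.range N, (f (fullShift^[i * N + n] (glue N K x)) - f (fullShift^[n] (x i)))|
        ≤ N * ε + 2 * C * (2 * k) + 2 * C * ∑ n ∈ Finset.range N, O.indicator (fun _ => (1 : ℝ)) (fullShift^[n] (x i)) := by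
      intro i hi
      have hi' := Finset.mem_range.mp hi
      refine (Finset.abs_sum_le_sum_abs _ _).trans ?_
      have h2 : ∀ n ∈ Finset.range N, |f (fullShift^[i * N + n] (glue N K x)) - f (fullShift^[n] (x i))| ≤
          ε + 2 * C * (if k ≤ n ∧ n + k < N then (0 : ℝ) else 1) +
            2 * C * O.indicator (fun _ => (1 : ℝ)) (fullShift^[n] (x i)) := by
        intro n _
        have hb : |f (fullShift^[i * N + n] (glue N K x)) - f (fullShift^[n] (x i))| ≤ 2 * C := by
          have := abs_sub (f (fullShift^[i * N + n] (glue N K x))) (f (fullShift^[n] (x i)))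
          linarith [hC (fullShift^[i * N + n] (glue N K x)), hC (fullShift^[n] (x i))]
        by_cases hx : fullShift^[n] (x i) ∈ O
        · rw [indicator_of_mem hx]
          split_ifs <;> linarith
        · rw [indicator_of_notMem hx]
          split_ifs with hn
          · have := hO _ hx _ (fun j hj => glue_eq (N := N) (K := K) x hi' hn.1 hn.2 j hj)
            linarith
          · linarith
      refine (Finset.sum_le_sum h2).trans ?_
      rw [Finset.sum_add_distrib, Finset.sum_add_distrib, ← Finset.mul_sum, ← Finset.mul_sum]
      simp only [Finset.sum_const, Finset.card_range, nsmul_eq_mul]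
      have := mul_le_mul_of_nonneg_left (block_bad (N := N) (k := k)) (by linarith : 0 ≤ 2 * C)
      linarith
    refine (Finset.sum_le_sum h1).trans (le_of_eq ?_)
    rw [Finset.sum_add_distrib, Finset.sum_add_distrib]
    simp only [Finset.sum_const, Finset.card_range, nsmul_eq_mul]
    simp only [← Finset.mul_sum]
    rw [hS]; ring
  have e1 : ∀ A B : ℝ, ((N * K : ℕ) : ℝ)⁻¹ * A - (K : ℝ)⁻¹ * ((N : ℝ)⁻¹ * B) = ((K : ℝ)⁻¹ * (N : ℝ)⁻¹) * (A - B) := by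
    intro A B; push_cast; rw [mul_inv]; ring
  rw [e1, abs_mul, abs_of_pos (by positivity : 0 < (K : ℝ)⁻¹ * (N : ℝ)⁻¹)]
  refine (mul_le_mul_of_nonneg_left key (by positivity)).trans ?_
  have e2 : (K : ℝ)⁻¹ * (N : ℝ)⁻¹ * (K * (N * ε) + 2 * C * (K * (2 * k)) + 2 * C * S) =
      ε + 2 * C * (2 * k / N) + 2 * C * ((K : ℝ)⁻¹ * ((N : ℝ)⁻¹ * S)) := by field_simp
  rw [e2]
  have e3 : 2 * (k : ℝ) / N ≤ ε := by rw [div_le_iff₀ hN0]; exact hkN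
  have := mul_le_mul_of_nonneg_left e3 (by linarith : 0 ≤ 2 * C)
  linarith

lemma integral_birk {μ : Measure (ℤ → M)} [IsProbabilityMeasure μ] (hmp : MeasurePreserving fullShift μ μ) {N : ℕ} (hN : 1 ≤ N)
    {g : (ℤ → M) → ℝ} (hg : Measurable g) (hi : Integrable g μ) :
    Integrable (fun x => (N : ℝ)⁻¹ * ∑ n ∈ Finset.range N, g (fullShift^[n] x)) μ ∧
    ∫ x, (N : ℝ)⁻¹ * ∑ n ∈ Finset.range N, g (fullShift^[n] x) ∂μ = ∫ x, g x ∂μ := by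
  have h1 : ∀ n : ℕ, Integrable (fun x => g (fullShift^[n] x)) μ := fun n =>
    (hmp.iterate n).integrable_comp_of_integrable hi
  have h2 : ∀ n : ℕ, ∫ x, g (fullShift^[n] x) ∂μ = ∫ x, g x ∂μ := fun n => by
    have hn := hmp.iterate n
    conv_rhs => rw [← hn.map_eq]
    rw [integral_map hn.measurable.aemeasurable hg.aestronglyMeasurable]
  have hN0 : (N : ℝ) ≠ 0 := by
    have : N ≠ 0 := by omega
    exact_mod_cast this
  refine ⟨(integrable_finsetSum _ fun n _ => h1 n).const_mul _, ?_⟩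
  rw [integral_const_mul, integral_finsetSum _ fun n _ => h1 n]
  simp only [h2, Finset.sum_const, Finset.card_range, nsmul_eq_mul]
  rw [inv_mul_cancel_left₀ hN0]

lemma dense_perSet : Dense (perSet M) := by
  intro μ
  refine mem_closure_of fun F ε' hε' => ?_
  let m : Measure (ℤ → M) := μ.1
  have hmp : MeasurePreserving fullShift m m := ⟨continuous_fullShift.measurable, μ.2⟩
  obtain ⟨C, hC0, hC⟩ : ∃ C : ℝ, 0 ≤ C ∧ ∀ f ∈ F, ∀ x, |f x| ≤ C := by
    refine ⟨∑ f ∈ F, ‖f‖, Finset.sum_nonneg fun _ _ => norm_nonneg _, fun f hf x => ?_⟩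
    exact (f.norm_coe_le_norm x).trans (Finset.single_le_sum (f := fun f => ‖f‖) (fun _ _ => norm_nonneg _) hf)
  obtain ⟨ε, hε, hεε⟩ : ∃ ε : ℝ, 0 < ε ∧ (2 + 6 * C) * ε < ε' := by
    refine ⟨ε' / (3 + 6 * C), by positivity, ?_⟩
    rw [mul_div_assoc', div_lt_iff₀ (by positivity)]
    nlinarith
  obtain ⟨k, O, hOm, hOs, hO⟩ := exists_win m F hε
  obtain ⟨N, hNk⟩ := exists_nat_ge (2 * (k : ℝ) / ε + 1)
  have hN : 1 ≤ N := by
    have h1 : (1 : ℝ) ≤ N := by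
      have : 0 ≤ 2 * (k : ℝ) / ε := by positivity
      linarith
    exact_mod_cast h1
  have hkN : 2 * (k : ℝ) ≤ ε * N := by
    have : 2 * (k : ℝ) / ε ≤ N := by linarith
    rw [div_le_iff₀ hε] at this; linarith
  let G : Option F → (ℤ → M) → ℝ := fun o => match o with
    | none => O.indicator (fun _ => (1 : ℝ))
    | some f => fun x => f.1 x
  have hGm : ∀ o, Measurable (G o) := by
    rintro (_ | f)
    · exact measurable_const.indicator hOm
    · exact f.1.continuous.measurable
  have hGi : ∀ o, Integrable (G o) m := by
    rintro (_ | f)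
    · exact (integrable_const _).indicator hOm
    · exact f.1.integrable m
  have hb := fun o => integral_birk hmp hN (hGm o) (hGi o)
  obtain ⟨y, hy⟩ := exists_sample m (fun o x => (N : ℝ)⁻¹ * ∑ n ∈ Finset.range N, G o (fullShift^[n] x))
    (fun o => measurable_const.mul (Finset.measurable_sum _ fun n _ =>
      (hGm o).comp (hmp.iterate n).measurable)) (fun o => (hb o).1)
  simp only [fun o => (hb o).2] at hy
  have hev : ∀ᶠ n : ℕ in atTop, ∀ o, |(n : ℝ)⁻¹ * ∑ j ∈ Finset.range n, ((N : ℝ)⁻¹ * ∑ n ∈ Finset.range N, G o (fullShift^[n] (y j)))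
      - ∫ x, G o x ∂m| < ε := eventually_all.mpr fun o => by
    have := (Metric.tendsto_nhds.mp (hy o)) ε hε
    simpa [Real.dist_eq] using this
  obtain ⟨K, hKe, hK⟩ := (hev.and (eventually_ge_atTop 1)).exists
  have hNK : 1 ≤ N * K := Nat.mul_pos hN hK
  refine ⟨orb hNK (glue N K y) (glue_per N K y), ⟨_, hNK, _, glue_per N K y, rfl⟩, fun f hf => ?_⟩
  rw [orb_integral]
  have h1 := glue_est (hC f hf) hε (hO f hf) hN hK hkN y
  have h2 := hKe none
  have h3 := hKe (some ⟨f, hf⟩)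
  simp only [G] at h2 h3
  rw [integral_indicator_const _ hOm, smul_eq_mul, mul_one] at h2
  set A := ((N * K : ℕ) : ℝ)⁻¹ * ∑ t ∈ Finset.range (N * K), f (fullShift^[t] (glue N K y))
  set B := (K : ℝ)⁻¹ * ∑ i ∈ Finset.range K, ((N : ℝ)⁻¹ * ∑ n ∈ Finset.range N, f (fullShift^[n] (y i)))
  set E := (K : ℝ)⁻¹ * ∑ i ∈ Finset.range K, ((N : ℝ)⁻¹ * ∑ n ∈ Finset.range N,
      O.indicator (fun _ => (1 : ℝ)) (fullShift^[n] (y i)))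
  have hE : E ≤ 2 * ε := by linarith [(abs_lt.mp h2).2]
  have hCE : 2 * C * E ≤ 2 * C * (2 * ε) := mul_le_mul_of_nonneg_left hE (by linarith)
  have h4 : |A - ∫ x, f x ∂m| ≤ |A - B| + |B - ∫ x, f x ∂m| := abs_sub_le _ _ _
  change |A - ∫ x, f x ∂m| < ε'
  nlinarith

end Density
end ShiftTypical

open Filter MeasureTheory Topology Metric Set
open scoped ENNReal NNReal BoundedContinuousFunction

namespace ShiftTypical

section Haar
variable (s : ℕ) [NeZero s]

/-- uniform measure on sequences of symbols -/
noncomputable def eta : Measure (ℤ → ZMod s) := Measure.addHaarMeasure ⊤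

instance : IsProbabilityMeasure (eta s) := ⟨by
  have := Measure.addHaarMeasure_self (K₀ := (⊤ : TopologicalSpace.PositiveCompacts (ℤ → ZMod s)))
  simpa [eta] using this⟩

instance : (eta s).IsAddHaarMeasure := by unfold eta; infer_instance

lemma eta_shift : (eta s).map fullShift = eta s := by
  let φ : (ℤ → ZMod s) →+ (ℤ → ZMod s) := ⟨⟨fullShift, rfl⟩, fun _ _ => rfl⟩
  have h := AddMonoidHom.measurePreserving (f := φ) (μ := eta s) (ν := eta s)
    (show Continuous fullShift from continuous_fullShift) (fun y => ⟨fun j => y (j + 1), by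
      funext j; change y (j - 1 + 1) = y j; rw [sub_add_cancel]⟩) (by simp)
  exact h.map_eq

lemma eta_count {s : ℕ} [NeZero s] (L : ℕ) {A : Set (ℤ → ZMod s)} (hA : MeasurableSet A)
    (h : ∀ w ∈ A, ∀ w' ∈ A, (∀ j : ℤ, L < j.natAbs → w j = w' j) → w = w') :
    eta s A ≤ ((s : ℝ≥0∞) ^ (2 * L + 1))⁻¹ := by
  classical
  let I := Finset.Icc (-(L : ℤ)) L
  let emb : (I → ZMod s) → (ℤ → ZMod s) := fun t j => if h : j ∈ I then t ⟨j, h⟩ else 0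
  have hinj : Function.Injective emb := by
    intro t t' htt
    funext ⟨j, hj⟩
    have := congrFun htt j
    simpa [emb, hj] using this
  have hdisj : Pairwise (Function.onFun Disjoint fun t => (fun w => emb t + w) ⁻¹' A) := by
    intro t t' htt
    rw [Function.onFun, Set.disjoint_left]
    intro w hw hw'
    apply htt
    apply hinj
    have := h _ hw _ hw' (fun j hj => by
      have : j ∉ I := by simp only [I, Finset.mem_Icc]; omega
      simp [emb, this])
    exact add_right_cancel this
  have hmeas : ∀ t, MeasurableSet ((fun w => emb t + w) ⁻¹' A) := fun t =>
    hA.preimage (measurable_const_add _)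
  have h1 : ∑ t, eta s ((fun w => emb t + w) ⁻¹' A) ≤ 1 := by
    rw [← tsum_fintype (L := .unconditional _), ← measure_iUnion hdisj hmeas]
    exact prob_le_one
  simp only [measure_preimage_add, Finset.sum_const, Finset.card_univ, nsmul_eq_mul] at h1
  have hcard : Fintype.card (I → ZMod s) = s ^ (2 * L + 1) := by
    rw [Fintype.card_fun, ZMod.card, Fintype.card_coe, Int.card_Icc]
    congr 1; omega
  rw [hcard] at h1
  push_cast at h1
  rw [ENNReal.le_inv_iff_mul_le, mul_comm]
  exact h1

end Haar

section Perturb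
variable {M : Type*} [MetricSpace M]

lemma exists_symbols [PerfectSpace M] (s : ℕ) [NeZero s] : ∃ C : ℕ → M → ZMod s → M,
    ∀ m a, Function.Injective (C m a) ∧ ∀ i, dist (C m a i) a < 1 / ((m : ℝ) + 1) := by
  have : ∀ (m : ℕ) (a : M), ∃ c : ZMod s → M, Function.Injective c ∧ ∀ i, dist (c i) a < 1 / ((m : ℝ) + 1) := by
    intro m a
    have hinf : (ball a (1 / ((m : ℝ) + 1))).Infinite := infinite_of_mem_nhds a (ball_mem_nhds a (by positivity))
    let g := hinf.natEmbedding
    refine ⟨fun i => (g i.val).1, fun i j hij => ?_, fun i => (g i.val).2⟩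
    exact ZMod.val_injective s (g.injective (Subtype.ext hij))
  choose C hC using this
  exact ⟨C, hC⟩

/-- perturbation of `q` by symbols -/
def pert {s : ℕ} (c : M → ZMod s → M) (q : ℤ → M) (w : ℤ → ZMod s) : ℤ → M := fun j => c (q j) (w j)

variable {s : ℕ} (c : M → ZMod s → M)

lemma pert_cont (q : ℤ → M) : Continuous (pert c q) :=
  continuous_pi fun j => continuous_of_discreteTopology.comp (continuous_apply j)

lemma pert_shift (q : ℤ → M) (w : ℤ → ZMod s) : fullShift (pert c q w) = pert c (fullShift q) (fullShift w) := rfl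

/-- separation on a set of letters -/
def Sep (R : Set M) (e : ℝ) : Prop := ∀ a ∈ R, ∀ i i', dist (c a i) (c a i') ≤ 2 * e → i = i'

lemma exists_sep [NeZero s] (hc : ∀ a, Function.Injective (c a)) {R : Set M} (hR : R.Finite) : ∃ e : ℝ, 0 < e ∧ Sep c R e := by
  have h : ∀ᶠ e : ℝ in 𝓝[>] 0, ∀ a ∈ R, ∀ i i', i ≠ i' → 2 * e < dist (c a i) (c a i') := by
    refine (eventually_all_finite hR).mpr fun a _ => eventually_all.mpr fun i => eventually_all.mpr fun i' => ?_
    by_cases hii : i = i'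
    · filter_upwards with e h using absurd hii h
    · have hpos : 0 < dist (c a i) (c a i') := dist_pos.mpr fun h => hii (hc a h)
      filter_upwards [Ioo_mem_nhdsGT (half_pos hpos)] with e he _
      linarith [he.2]
  obtain ⟨e, h1, h2⟩ := (h.and self_mem_nhdsWithin).exists
  refine ⟨e, h2, fun a ha i i' hd => ?_⟩
  by_contra hne
  linarith [h1 a ha i i' hne]

lemma per_finite {P : ℕ} (hP : 1 ≤ P) {p : ℤ → M} (hp : fullShift^[P] p = p) : (range p).Finite := by
  have hper : Function.Periodic p (P : ℤ) := fun j => by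
    conv_lhs => rw [← hp]
    rw [iterate_apply, add_sub_cancel_right]
  refine ((Set.finite_Ico (0 : ℤ) P).image p).subset ?_
  rintro _ ⟨j, rfl⟩
  refine ⟨j % P, ⟨Int.emod_nonneg _ (by omega), Int.emod_lt_of_pos _ (by omega)⟩, ?_⟩
  have := hper.sub_zsmul_eq (x := j) (j / P)
  rw [smul_eq_mul, mul_comm] at this
  rw [Int.emod_def]
  exact this

variable [CompleteSpace M] [TopologicalSpace.SeparableSpace M] [MeasurableSpace M] [BorelSpace M] [NeZero s]

lemma map_ball {R : Set M} {e : ℝ} (he : 0 < e) (hs : Sep c R e) {q : ℤ → M} (hq : ∀ j, q j ∈ R) (L : ℕ) (y : ℤ → M) :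
    (eta s).map (pert c q) {z | shiftDist y z ≤ (1/2)^L * (e/(1+e))} ≤ ((s : ℝ≥0∞) ^ (2 * L + 1))⁻¹ := by
  have hcl : IsClosed {z : ℤ → M | shiftDist y z ≤ (1/2)^L * (e/(1+e))} :=
    isClosed_le (continuous_shiftDist.comp (by fun_prop : Continuous fun z : ℤ → M => (y, z))) continuous_const
  rw [Measure.map_apply (pert_cont c q).measurable hcl.measurableSet]
  refine eta_count L (hcl.preimage (pert_cont c q)).measurableSet fun w hw w' hw' hag => ?_
  funext j
  by_cases hj : j.natAbs ≤ L
  · apply hs (q j) (hq j)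
    have h1 := dist_le_of_shiftDist he hw hj
    have h2 := dist_le_of_shiftDist he hw' hj
    calc dist (c (q j) (w j)) (c (q j) (w' j)) ≤ dist (y j) (c (q j) (w j)) + dist (y j) (c (q j) (w' j)) :=
          dist_triangle_left _ _ _
      _ ≤ 2 * e := by
          change dist (y j) (c (q j) (w j)) ≤ e at h1
          change dist (y j) (c (q j) (w' j)) ≤ e at h2
          linarith
  · exact hag j (by omega)

lemma map_ret {R : Set M} {e : ℝ} (he : 0 < e) (hs : Sep c R e) {q : ℤ → M} (hq : ∀ j, q j ∈ R) (L : ℕ) {n : ℕ} (hn : 1 ≤ n) :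
    (eta s).map (pert c q) {z | shiftDist (fullShift^[n] z) z ≤ (1/2)^L * (e/(1+e))} ≤ ((s : ℝ≥0∞) ^ (2 * L + 1))⁻¹ := by
  have hcl : IsClosed {z : ℤ → M | shiftDist (fullShift^[n] z) z ≤ (1/2)^L * (e/(1+e))} :=
    isClosed_le (continuous_shiftDist.comp ((continuous_fullShift.iterate n).prodMk continuous_id)) continuous_const
  rw [Measure.map_apply (pert_cont c q).measurable hcl.measurableSet]
  refine eta_count L (hcl.preimage (pert_cont c q)).measurableSet fun w hw w' hw' hag => ?_
  have key : ∀ m : ℕ, ∀ j : ℤ, j < -L + m → w j = w' j := by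
    intro m
    induction m with
    | zero => intro j hj; exact hag j (by omega)
    | succ m ih =>
      intro j hj
      by_cases hjL : j.natAbs ≤ L
      · apply hs (q j) (hq j)
        have h1 := dist_le_of_shiftDist he hw hjL
        have h2 := dist_le_of_shiftDist he hw' hjL
        rw [iterate_apply] at h1 h2
        have h3 : pert c q w (j - n) = pert c q w' (j - n) := by
          unfold pert; rw [ih (j - n) (by push_cast at hj; omega)]
        rw [h3] at h1
        change dist (pert c q w j) (pert c q w' j) ≤ 2 * e
        linarith [dist_triangle_left (pert c q w j) (pert c q w' j) (pert c q w' (j - n))]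
      · exact hag j (by omega)
  funext j
  exact key (j + L + 1).toNat j (by omega)

/-- perturbed periodic measure -/
noncomputable def pmeas {P : ℕ} (hP : 1 ≤ P) (p : ℤ → M) (hp : fullShift^[P] p = p) : MT M :=
  haveI : ∀ t, IsProbabilityMeasure ((eta s).map (pert c (fullShift^[t] p))) := fun t =>
    Measure.isProbabilityMeasure_map (pert_cont c _).measurable.aemeasurable
  mkMT hP (fun t => (eta s).map (pert c (fullShift^[t] p)))
    (fun t => by
      rw [Measure.map_map continuous_fullShift.measurable (pert_cont c _).measurable]
      have : fullShift ∘ pert c (fullShift^[t] p) = pert c (fullShift^[t + 1] p) ∘ fullShift := by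
        funext w
        rw [Function.iterate_succ_apply']; rfl
      rw [this, ← Measure.map_map (pert_cont c _).measurable continuous_fullShift.measurable, eta_shift])
    (by simp only [hp]; rfl)

lemma iter_mem (p : ℤ → M) (t : ℕ) (j : ℤ) : (fullShift^[t] p) j ∈ range p := by
  rw [iterate_apply]; exact mem_range_self _

lemma pmeas_le {P : ℕ} (hP : 1 ≤ P) (p : ℤ → M) (hp : fullShift^[P] p = p) {S : Set (ℤ → M)} {b : ℝ≥0∞}
    (h : ∀ t, (eta s).map (pert c (fullShift^[t] p)) S ≤ b) : ((pmeas c hP p hp).1 : Measure (ℤ → M)) S ≤ b :=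
  avgM_le hP _ S h

lemma pmeas_tendsto {P : ℕ} (hP : 1 ≤ P) (p : ℤ → M) (hp : fullShift^[P] p = p) (C : ℕ → M → ZMod s → M)
    (hC : ∀ m a i, dist (C m a i) a < 1 / ((m : ℝ) + 1)) :
    Tendsto (fun m => pmeas (C m) hP p hp) atTop (𝓝 (orb hP p hp)) := by
  rw [tendsto_subtype_rng, ProbabilityMeasure.tendsto_iff_forall_integral_tendsto]
  intro f
  have : ∀ m t, IsProbabilityMeasure ((eta s).map (pert (C m) (fullShift^[t] p))) := fun m t =>
    Measure.isProbabilityMeasure_map (pert_cont (C m) _).measurable.aemeasurable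
  have h1 : ∀ m, ∫ x, f x ∂((pmeas (C m) hP p hp).1 : Measure (ℤ → M)) =
      (P : ℝ)⁻¹ * ∑ t ∈ Finset.range P, ∫ w, f (pert (C m) (fullShift^[t] p) w) ∂(eta s) := by
    intro m
    refine (avgM_integral _ f).trans ?_
    congr 1
    refine Finset.sum_congr rfl fun t _ => ?_
    rw [integral_map (pert_cont (C m) _).measurable.aemeasurable f.continuous.aestronglyMeasurable]
  rw [orb_integral]
  simp only [h1]
  refine Tendsto.const_mul _ (tendsto_finsetSum _ fun t _ => ?_)
  have h2 : f (fullShift^[t] p) = ∫ _w, f (fullShift^[t] p) ∂(eta s) := by simp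
  rw [h2]
  refine tendsto_integral_of_dominated_convergence (fun _ => ‖f‖)
    (fun m => (f.continuous.comp (pert_cont (C m) _)).aestronglyMeasurable) (integrable_const _)
    (fun m => ae_of_all _ fun w => f.norm_coe_le_norm _) (ae_of_all _ fun w => ?_)
  refine (f.continuous.tendsto _).comp (tendsto_pi_nhds.mpr fun j => ?_)
  rw [tendsto_iff_dist_tendsto_zero]
  exact squeeze_zero (fun _ => dist_nonneg) (fun m => (hC m _ _).le) tendsto_one_div_add_atTop_nhds_zero_nat

end Perturb
end ShiftTypical

open Filter MeasureTheory Topology Metric Set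
open scoped ENNReal NNReal BoundedContinuousFunction

namespace ShiftTypical

lemma exists_scale (k : ℕ) {e : ℝ} (he : 0 < e) {δ : ℝ} (hδ : 0 < δ) : ∃ L : ℕ, ∃ r : ℝ, ∃ θ : ℝ,
    r = (1/2)^L * (e/(1+e)) ∧ 0 < r ∧ r < 1 / ((k : ℝ) + 1) ∧ 0 < θ ∧ θ < δ ∧ θ < 1 ∧
    ((((2 ^ (k + 1) : ℕ) : ℝ≥0∞)) ^ (2 * L + 1))⁻¹ = ENNReal.ofReal (θ * r ^ (k + 1)) := by
  set E := e / (1 + e) with hE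
  have hE0 : 0 < E := by positivity
  have h1 : Tendsto (fun L : ℕ => (1/2 : ℝ)^L * E) atTop (𝓝 0) := by
    simpa using (tendsto_pow_atTop_nhds_zero_of_lt_one (by norm_num : (0:ℝ) ≤ 1/2) (by norm_num)).mul_const E
  have h2 : Tendsto (fun L : ℕ => ((1/2 : ℝ)^L * (1 / 2 / E)) ^ (k + 1)) atTop (𝓝 0) := by
    have := ((tendsto_pow_atTop_nhds_zero_of_lt_one (by norm_num : (0:ℝ) ≤ 1/2) (by norm_num)).mul_const (1 / 2 / E)).pow (k + 1)
    simpa using this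
  obtain ⟨L, hL1, hL2, hL3⟩ := ((h1.eventually_lt_const (by positivity : 0 < 1 / ((k : ℝ) + 1))).and
    ((h2.eventually_lt_const hδ).and (h2.eventually_lt_const one_pos))).exists
  refine ⟨L, _, _, rfl, by positivity, hL1, by positivity, hL2, hL3, ?_⟩
  have : ((1/2 : ℝ)^L * (1 / 2 / E)) ^ (k + 1) * ((1/2 : ℝ)^L * E) ^ (k + 1) = (((2 : ℝ) ^ (k + 1)) ^ (2 * L + 1))⁻¹ := by
    rw [← mul_pow, ← pow_mul, mul_comm (k + 1), pow_mul, ← inv_pow]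
    congr 1
    have : (1/2 : ℝ)^L * (1 / 2 / E) * ((1/2 : ℝ)^L * E) = (1/2)^(2 * L + 1) := by
      field_simp
      ring
    rw [this, one_div, inv_pow]
  rw [this, ENNReal.ofReal_inv_of_pos (by positivity)]
  congr 1
  rw [ENNReal.ofReal_pow (by positivity), ENNReal.ofReal_pow (by norm_num)]
  simp

section Dens
variable {M : Type*} [MetricSpace M] [CompleteSpace M] [TopologicalSpace.SeparableSpace M]
  [MeasurableSpace M] [BorelSpace M]

lemma one_sub_le_of {ν : Measure (ℤ → M)} [IsProbabilityMeasure ν] {S : Set (ℤ → M)} {b : ℝ≥0∞} (h : ν Sᶜ ≤ b) :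
    1 - b ≤ ν S := by
  rw [tsub_le_iff_right]
  calc (1 : ℝ≥0∞) = ν (S ∪ Sᶜ) := by simp
    _ ≤ ν S + ν Sᶜ := measure_union_le _ _
    _ ≤ _ := by gcongr

lemma pmeas_upDim (k : ℕ) {c : M → ZMod (2 ^ (k + 1)) → M} (hc : ∀ a, Function.Injective (c a))
    {P : ℕ} (hP : 1 ≤ P) (p : ℤ → M) (hp : fullShift^[P] p = p) {b : ℝ≥0∞} (hb : b < 1) :
    pmeas c hP p hp ∈ good (upDim M k) b := by
  obtain ⟨e, he, hs⟩ := exists_sep c hc (per_finite hP hp)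
  obtain ⟨L, r, θ, hr, hr0, hrk, hθ0, -, hθ1, heq⟩ := exists_scale k he one_pos
  have : {x : ℤ → M | ((pmeas c hP p hp).1, x) ∈ upDim M k} = univ := by
    refine eq_univ_of_forall fun x => ⟨r, hr0, hrk, ?_⟩
    have h1 : ((pmeas c hP p hp).1 : Measure (ℤ → M)) {y | r < shiftDist x y}ᶜ ≤ ENNReal.ofReal (θ * r ^ (k + 1)) := by
      rw [← heq]
      refine pmeas_le c hP p hp fun t => ?_
      have := map_ball c he hs (iter_mem p t) L x
      rw [← hr] at this
      simpa only [compl_ofPred, not_lt] using this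
    refine lt_of_lt_of_le ?_ (one_sub_le_of h1)
    have hlt : ENNReal.ofReal (θ * r ^ (k + 1)) < ENNReal.ofReal (r ^ (k + 1)) := by
      rw [ENNReal.ofReal_lt_ofReal_iff (by positivity)]
      nlinarith [pow_pos hr0 (k + 1)]
    have hr1 : r ^ (k + 1) ≤ 1 := by
      refine pow_le_one₀ hr0.le (hrk.le.trans ?_)
      rw [div_le_one (by positivity)]
      linarith [(Nat.cast_nonneg k : (0 : ℝ) ≤ k)]
    rw [ENNReal.ofReal_lt_ofReal_iff (by positivity)] at hlt
    rw [← ENNReal.ofReal_one, ← ENNReal.ofReal_sub _ (by positivity), ← ENNReal.ofReal_sub _ (by positivity),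
      ENNReal.ofReal_lt_ofReal_iff (by linarith)]
    linarith
  change b < ((pmeas c hP p hp).1 : Measure (ℤ → M)) {x : ℤ → M | ((pmeas c hP p hp).1, x) ∈ upDim M k}
  rw [this]; simpa using hb

lemma pmeas_upRec (k : ℕ) {c : M → ZMod (2 ^ (k + 1)) → M} (hc : ∀ a, Function.Injective (c a))
    {P : ℕ} (hP : 1 ≤ P) (p : ℤ → M) (hp : fullShift^[P] p = p) {b : ℝ≥0∞} (hb : b < 1) :
    pmeas c hP p hp ∈ good (upRec M k) b := by
  obtain ⟨e, he, hs⟩ := exists_sep c hc (per_finite hP hp)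
  have hb' : b.toReal < 1 := by
    have := ENNReal.toReal_lt_toReal (hb.ne_top) ENNReal.one_ne_top |>.mpr hb
    simpa using this
  obtain ⟨L, r, θ, hr, hr0, hrk, hθ0, hθ, hθ1, heq⟩ := exists_scale k he (sub_pos.mpr hb')
  have hbθ : b < 1 - ENNReal.ofReal θ := by
    rw [← ENNReal.ofReal_one, ← ENNReal.ofReal_sub _ hθ0.le]
    rw [ENNReal.lt_ofReal_iff_toReal_lt hb.ne_top]
    linarith
  refine hbθ.trans_le ?_
  change _ ≤ ((pmeas c hP p hp).1 : Measure (ℤ → M)) {x : ℤ → M | ((pmeas c hP p hp).1, x) ∈ upRec M k}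
  apply one_sub_le_of
  set J := Finset.Icc 1 ⌊(r⁻¹) ^ (k + 1)⌋₊ with hJ
  have hsub : {x : ℤ → M | ((pmeas c hP p hp).1, x) ∈ upRec M k}ᶜ ⊆
      ⋃ n ∈ J, {z | shiftDist (fullShift^[n] z) z ≤ r} := by
    intro x hx
    simp only [mem_compl_iff, mem_ofPred_eq, upRec, not_exists, not_and] at hx
    have := hx r hr0 hrk
    push Not at this
    obtain ⟨n, h1, h2, h3⟩ := this
    exact mem_iUnion₂.mpr ⟨n, Finset.mem_Icc.mpr ⟨h1, Nat.le_floor h2⟩, h3⟩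
  refine (measure_mono hsub).trans ((measure_biUnion_finset_le _ _).trans ?_)
  have hle : ∀ n ∈ J, ((pmeas c hP p hp).1 : Measure (ℤ → M)) {z | shiftDist (fullShift^[n] z) z ≤ r} ≤
      ENNReal.ofReal (θ * r ^ (k + 1)) := by
    intro n hn
    rw [← heq]
    refine pmeas_le c hP p hp fun t => ?_
    have := map_ret c he hs (iter_mem p t) L (Finset.mem_Icc.mp hn).1
    rwa [← hr] at this
  refine (Finset.sum_le_sum hle).trans ?_
  rw [Finset.sum_const, nsmul_eq_mul, ← ENNReal.ofReal_natCast, ← ENNReal.ofReal_mul (by positivity)]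
  apply ENNReal.ofReal_le_ofReal
  have hcard : (J.card : ℝ) ≤ (r⁻¹) ^ (k + 1) := by
    rw [hJ, Nat.card_Icc, Nat.add_sub_cancel]
    exact Nat.floor_le (by positivity)
  calc (J.card : ℝ) * (θ * r ^ (k + 1)) ≤ (r⁻¹) ^ (k + 1) * (θ * r ^ (k + 1)) := by gcongr
    _ = θ := by rw [inv_pow]; field_simp

lemma dense_of_pmeas [PerfectSpace M] {s : ℕ} [NeZero s] {D : Set (MT M)}
    (h : ∀ (c : M → ZMod s → M), (∀ a, Function.Injective (c a)) → ∀ (P : ℕ) (hP : 1 ≤ P) (p : ℤ → M)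
      (hp : fullShift^[P] p = p), pmeas c hP p hp ∈ D) : Dense D := by
  obtain ⟨C, hC⟩ := exists_symbols (M := M) s
  have hsub : perSet M ⊆ closure D := by
    rintro _ ⟨P, hP, p, hp, rfl⟩
    exact mem_closure_of_tendsto (pmeas_tendsto hP p hp C fun m a i => (hC m a).2 i)
      (Eventually.of_forall fun m => h (C m) (fun a => (hC m a).1) P hP p hp)
  exact dense_closure.mp (dense_perSet.mono hsub)

end Dens
end ShiftTypical

open ShiftTypical

/-- For the full shift on `ℤ → M` over a perfect Polish metric space `M`,
the set of ergodic invariant measures `μ` such that, for `μ`-a.e. `x`,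
`R̲(x) = d̲_μ(x) = 0` and `R̄(x) = d̄_μ(x) = +∞`, is a residual subset of `M(T)`. -/
theorem fullShift_typicalErgodic_residual {M : Type*} [MetricSpace M] [CompleteSpace M]
    [TopologicalSpace.SeparableSpace M] [PerfectSpace M]
    [MeasurableSpace M] [BorelSpace M] :
    {μ : {ν : ProbabilityMeasure (ℤ → M) // ν.toMeasure.map fullShift = ν.toMeasure} |
        Ergodic fullShift μ.1.toMeasure ∧
        ∀ᵐ x ∂μ.1.toMeasure,
          lowerRecRate shiftDist fullShift x = 0 ∧
          lowerLocalDim shiftDist μ.1.toMeasure x = 0 ∧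
          upperRecRate shiftDist fullShift x = ⊤ ∧
          upperLocalDim shiftDist μ.1.toMeasure x = ⊤} ∈
      residual {ν : ProbabilityMeasure (ℤ → M) // ν.toMeasure.map fullShift = ν.toMeasure} := by
  have : SecondCountableTopology M := UniformSpace.secondCountable_of_separable M
  have hE : ∀ᶠ μ in residual (MT M), Ergodic fullShift (μ.1 : Measure (ℤ → M)) :=
    ergodic_residual fun f e he => dense_perSet.mono (by
      rintro _ ⟨P, hP, p, hp, rfl⟩
      exact orb_ergSet hP p hp f he)
  have h1 : ∀ᶠ μ in residual (MT M), ∀ k, ∀ᵐ x ∂(μ.1 : Measure (ℤ → M)), (μ.1, x) ∈ lowRec M k :=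
    eventually_countable_forall.mpr fun k => ae_residual (isOpen_lowRec k) fun c hc => dense_perSet.mono (by
      rintro _ ⟨P, hP, p, hp, rfl⟩
      exact orb_lowRec hP p hp k hc)
  have h2 : ∀ᶠ μ in residual (MT M), ∀ k, ∀ᵐ x ∂(μ.1 : Measure (ℤ → M)), (μ.1, x) ∈ lowDim M k :=
    eventually_countable_forall.mpr fun k => ae_residual (isOpen_lowDim k) fun c hc => dense_perSet.mono (by
      rintro _ ⟨P, hP, p, hp, rfl⟩
      exact orb_lowDim hP p hp k hc)
  have h3 : ∀ᶠ μ in residual (MT M), ∀ k, ∀ᵐ x ∂(μ.1 : Measure (ℤ → M)), (μ.1, x) ∈ upRec M k :=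
    eventually_countable_forall.mpr fun k => ae_residual (isOpen_upRec k) fun _ hb =>
      dense_of_pmeas (s := 2 ^ (k + 1)) fun _ hc _ hP p hp => pmeas_upRec k hc hP p hp hb
  have h4 : ∀ᶠ μ in residual (MT M), ∀ k, ∀ᵐ x ∂(μ.1 : Measure (ℤ → M)), (μ.1, x) ∈ upDim M k :=
    eventually_countable_forall.mpr fun k => ae_residual (isOpen_upDim k) fun _ hb =>
      dense_of_pmeas (s := 2 ^ (k + 1)) fun _ hc _ hP p hp => pmeas_upDim k hc hP p hp hb
  filter_upwards [hE, h1, h2, h3, h4] with μ hμ g1 g2 g3 g4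
  refine ⟨hμ, ?_⟩
  filter_upwards [ae_all_iff.mpr g1, ae_all_iff.mpr g2, ae_all_iff.mpr g3, ae_all_iff.mpr g4] with x x1 x2 x3 x4
  exact ⟨lowerRecRate_eq x1, lowerLocalDim_eq x2, upperRecRate_eq x3, upperLocalDim_eq x4⟩
end
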